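/- arXiv:1603.07922 — 2 statements merged into one kernel-verified Lean document; each statement's English description precedes it below -/
import Mathlib

section
/- Let S be a finite set of prime numbers and let a be a positive integer. There are only finitely many triples (x, y, w) of S-units with gcd(x, y) ≤ a for which there exists a nonzero integer z such that x + y = w·z². -/
/-- An `S`-unit: a nonzero integer all of whose prime divisors belong to `S`. -/
def IsSUnit (S : Finset ℕ) (x : ℤ) : Prop :=
  x ≠ 0 ∧ ∀ p : ℕ, p.Prime → (p : ℤ) ∣ x → p ∈ S


/-! ### Part 1: explicit Padé approximants -/
namespace SUnitAux
open Finset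

lemma fact_dvd (c l : ℕ) : l.factorial ∣ 3 ^ l * ∏ i ∈ range l, (c + 3 * i) := by
  obtain ⟨e, u, hu, hl⟩ := Nat.exists_eq_pow_mul_and_not_dvd (Nat.factorial_ne_zero l) 3 (by norm_num)
  have hcop : Nat.Coprime 3 u := (Nat.Prime.coprime_iff_not_dvd Nat.prime_three).2 hu
  have he : e ≤ l := by
    have : Fact (Nat.Prime 3) := ⟨Nat.prime_three⟩
    have h1 := sub_one_mul_padicValNat_factorial (p := 3) l
    have h2 : e ≤ padicValNat 3 l.factorial :=
      (padicValNat_dvd_iff_le (Nat.factorial_ne_zero l)).1 ⟨u, hl⟩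
    omega
  rw [hl]
  refine mul_dvd_mul (pow_dvd_pow 3 he) ?_
  rcases Nat.eq_zero_or_pos u with h0 | hupos
  · subst h0; simp at hu
  obtain ⟨t, ht⟩ : ∃ t : ℕ, (3 * t) ≡ 1 [MOD u] := by
    rcases Nat.lt_or_ge 1 u with h | h
    · obtain ⟨t, ht⟩ := Nat.exists_mul_mod_eq_one_of_coprime hcop h
      exact ⟨t, by rw [Nat.ModEq, ht.2, Nat.mod_eq_of_lt h]⟩
    · have : u = 1 := by omega
      subst this
      exact ⟨0, Nat.modEq_one⟩
  have h1 : u ∣ (t * c).ascFactorial l :=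
    (Dvd.intro_left _ hl.symm).trans (Nat.factorial_dvd_ascFactorial _ _)
  have h2 : ∏ i ∈ range l, (c + 3 * i) ≡ 3 ^ l * (t * c).ascFactorial l [MOD u] := by
    rw [Nat.ascFactorial_eq_prod_range, ← card_range l, ← prod_const, card_range, ← prod_mul_distrib]
    have : ∀ i ∈ range l, (c + 3 * i) ≡ 3 * (t * c + i) [MOD u] := by
      intro i _
      have : 3 * (t * c + i) = (3 * t) * c + 3 * i := by ring
      rw [this]
      apply Nat.ModEq.add_right
      simpa using (ht.symm.mul_right c)
    clear h1 hl he
    induction l with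
    | zero => simp; rfl
    | succ l ih =>
      rw [prod_range_succ, prod_range_succ]
      exact (ih fun i hi => this i (by simp at hi ⊢; omega)).mul (this l (by simp))
  exact (Nat.modEq_zero_iff_dvd).1 (h2.trans ((Nat.modEq_zero_iff_dvd).2 (h1.mul_left _)))

/-- building block of the coefficients -/
def bb (c l : ℕ) : ℕ := 3 ^ l * (∏ i ∈ range l, (c + 3 * i)) / l.factorial

lemma bb_cast (c l : ℕ) : (bb c l : ℚ) = 3 ^ l * (∏ i ∈ range l, ((c : ℚ) + 3 * i)) / l.factorial := by
  rw [bb, Nat.cast_div (fact_dvd c l) (by exact_mod_cast Nat.factorial_ne_zero l)]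
  push_cast; rfl

lemma bb_le (c d l : ℕ) (h : c ≤ 3 * d) : bb c l ≤ 9 ^ l * 2 ^ (d + l) := by
  rw [bb]
  apply Nat.div_le_of_le_mul
  have h1 : ∏ i ∈ range l, (c + 3 * i) ≤ 3 ^ l * d.ascFactorial l := by
    rw [Nat.ascFactorial_eq_prod_range, ← card_range l, ← prod_const, card_range, ← prod_mul_distrib]
    apply prod_le_prod'
    intro i _; omega
  have h2 : d.ascFactorial l ≤ l.factorial * 2 ^ (d + l) := by
    rcases Nat.eq_zero_or_pos d with h0 | h0
    · subst h0
      rcases Nat.eq_zero_or_pos l with h0 | h0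
      · subst h0; simp
      · rw [Nat.ascFactorial_eq_prod_range, prod_eq_zero (i := 0)] <;> simp [h0]
    · obtain ⟨d, rfl⟩ : ∃ d', d = d' + 1 := ⟨d - 1, by omega⟩
      rw [Nat.ascFactorial_eq_factorial_mul_choose]
      gcongr
      exact (Nat.choose_le_two_pow _ _).trans (Nat.pow_le_pow_right (by norm_num) (by omega))
  calc 3 ^ l * ∏ i ∈ range l, (c + 3 * i) ≤ 3 ^ l * (3 ^ l * (l.factorial * 2 ^ (d + l))) := by
        gcongr; exact h1.trans (by gcongr)
    _ = l.factorial * (9 ^ l * 2 ^ (d + l)) := by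
      rw [show (9:ℕ) = 3 * 3 by norm_num, mul_pow]; ring

/-- coefficients -/
def pc (n k : ℕ) : ℕ := bb (3 * (n - k) + 2) k * bb (3 * k + 4) (n - k)

lemma pc_le (n k : ℕ) (hk : k ≤ n) : pc n k ≤ 8 * 36 ^ n := by
  have h1 := bb_le (3 * (n - k) + 2) (n - k + 1) k (by omega)
  have h2 := bb_le (3 * k + 4) (k + 2) (n - k) (by omega)
  obtain ⟨m, rfl⟩ := Nat.exists_eq_add_of_le hk
  simp only [Nat.add_sub_cancel_left] at *
  rw [pc]
  simp only [Nat.add_sub_cancel_left] at *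
  calc _ ≤ (9 ^ k * 2 ^ (m + 1 + k)) * (9 ^ m * 2 ^ (k + 2 + m)) := Nat.mul_le_mul h1 h2
    _ = 8 * 36 ^ (k + m) := by
      rw [show (36:ℕ) = 9 * 2 * 2 by norm_num, mul_pow, mul_pow]; ring

def QA (m : ℕ) : ℚ := ∏ i ∈ range m, (3 * (i:ℚ) + 2)
def QB (m : ℕ) : ℚ := ∏ i ∈ range m, (3 * (i:ℚ) + 4)

lemma QA_pos (m : ℕ) : 0 < QA m := prod_pos fun i _ => by positivity
lemma QB_pos (m : ℕ) : 0 < QB m := prod_pos fun i _ => by positivity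

lemma pc_cast (k m : ℕ) : (pc (k + m) k : ℚ) =
    3 ^ (k + m) * QA (k + m) * QB (k + m) / (k.factorial * m.factorial * QB k * QA m) := by
  have hA : QA (k + m) = QA m * ∏ i ∈ range k, (((3 * m + 2 : ℕ) : ℚ) + 3 * i) := by
    rw [QA, QA, add_comm k m, prod_range_add]
    congr 1
    apply prod_congr rfl; intro i _; push_cast; ring
  have hB : QB (k + m) = QB k * ∏ i ∈ range m, (((3 * k + 4 : ℕ) : ℚ) + 3 * i) := by
    rw [QB, QB, prod_range_add]
    congr 1
    apply prod_congr rfl; intro i _; push_cast; ring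
  rw [pc]
  simp only [Nat.add_sub_cancel_left]
  push_cast
  rw [bb_cast, bb_cast, hA, hB]
  have := (QA_pos m).ne'
  have := (QB_pos k).ne'
  have : (k.factorial : ℚ) ≠ 0 := by exact_mod_cast Nat.factorial_ne_zero k
  have : (m.factorial : ℚ) ≠ 0 := by exact_mod_cast Nat.factorial_ne_zero m
  rw [pow_add]
  field_simp

lemma prod_split (k m : ℕ) (f : ℕ → ℚ) :
    ∏ x ∈ range (k + m + 1), f x =
      (∏ i ∈ range k, f (k - 1 - i)) * f k * ∏ i ∈ range m, f (k + 1 + i) := by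
  rw [show k + m + 1 = (k + 1) + m by ring, prod_range_add, prod_range_succ, prod_range_reflect]

lemma prod_split_erase (k m : ℕ) (f : ℕ → ℚ) :
    ∏ x ∈ (range (k + m + 1)).erase k, f x =
      (∏ i ∈ range k, f (k - 1 - i)) * ∏ i ∈ range m, f (k + 1 + i) := by
  have h := prod_split k m (fun x => if x = k then 1 else f x)
  rw [← mul_prod_erase (range (k + m + 1)) _ (a := k) (by simp)] at h
  simp only [if_true, one_mul, mul_one] at h
  rw [prod_congr rfl (g := f) (fun x hx => by simp [(mem_erase.1 hx).1])] at h
  rw [h]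
  congr 1
  · apply prod_congr rfl; intro i hi; simp at hi; rw [if_neg (by omega)]
  · apply prod_congr rfl; intro i hi; rw [if_neg (by omega)]

lemma prodE (k m : ℕ) : ∏ x ∈ (range (k + m + 1)).erase k, (3 * (k:ℚ) - 3 * x) =
    (-1) ^ m * 3 ^ (k + m) * k.factorial * m.factorial := by
  rw [prod_split_erase]
  have h1 : ∏ i ∈ range k, (3 * (k:ℚ) - 3 * ((k - 1 - i : ℕ) : ℚ)) = 3 ^ k * k.factorial := by
    rw [← prod_range_add_one_eq_factorial]
    push_cast
    rw [← card_range k, ← prod_const, card_range, ← prod_mul_distrib]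
    apply prod_congr rfl
    intro i hi
    simp at hi
    rw [Nat.cast_sub (by omega), Nat.cast_sub (by omega)]; push_cast; ring
  have h2 : ∏ i ∈ range m, (3 * (k:ℚ) - 3 * ((k + 1 + i : ℕ) : ℚ)) = (-1) ^ m * 3 ^ m * m.factorial := by
    rw [← prod_range_add_one_eq_factorial]
    push_cast
    rw [← mul_pow, ← card_range m, ← prod_const, card_range, ← prod_mul_distrib]
    apply prod_congr rfl
    intro i hi
    ring
  rw [h1, h2]; ring

lemma prodL (k m : ℕ) : ∏ x ∈ range (k + m + 1), (3 * (k:ℚ) - (3 * x + 1)) =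
    (-1) ^ (m + 1) * QA k * QB m := by
  rw [prod_split]
  have h1 : ∏ i ∈ range k, (3 * (k:ℚ) - (3 * ((k - 1 - i : ℕ) : ℚ) + 1)) = QA k := by
    apply prod_congr rfl
    intro i hi
    simp at hi
    rw [Nat.cast_sub (by omega), Nat.cast_sub (by omega)]; push_cast; ring
  have h2 : ∏ i ∈ range m, (3 * (k:ℚ) - (3 * ((k + 1 + i : ℕ) : ℚ) + 1)) = (-1) ^ m * QB m := by
    rw [QB, ← card_range m, ← prod_const, card_range, ← prod_mul_distrib]
    apply prod_congr rfl
    intro i hi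
    push_cast
    ring
  rw [h1, h2]; ring

lemma prodR (k m : ℕ) : ∏ x ∈ range (k + m + 1), ((3 * (k:ℚ) + 1) - 3 * x) =
    (-1) ^ m * QB k * QA m := by
  rw [prod_split]
  have h1 : ∏ i ∈ range k, ((3 * (k:ℚ) + 1) - 3 * ((k - 1 - i : ℕ) : ℚ)) = QB k := by
    apply prod_congr rfl
    intro i hi
    simp at hi
    rw [Nat.cast_sub (by omega), Nat.cast_sub (by omega)]; push_cast; ring
  have h2 : ∏ i ∈ range m, ((3 * (k:ℚ) + 1) - 3 * ((k + 1 + i : ℕ) : ℚ)) = (-1) ^ m * QA m := by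
    rw [QA, ← card_range m, ← prod_const, card_range, ← prod_mul_distrib]
    apply prod_congr rfl
    intro i hi
    push_cast
    ring
  rw [h1, h2]; ring

lemma pade_vanish_rat (n : ℕ) (P : Polynomial ℚ) (hP : P.natDegree ≤ 2 * n) :
    ∑ k ∈ range (n + 1), ((pc n k : ℚ) * P.eval (3 * (k:ℚ) + 1) -
      (pc n (n - k) : ℚ) * P.eval (3 * (k:ℚ))) = 0 := by
  classical
  set s : Finset (ℕ ⊕ ℕ) := (range (n + 1)).disjSum (range (n + 1)) with hs
  set v : ℕ ⊕ ℕ → ℚ := Sum.elim (fun k => 3 * (k:ℚ)) (fun k => 3 * (k:ℚ) + 1) with hv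
  have hinj : Set.InjOn v s := by
    rintro (a | a) _ (b | b) _ h <;> simp [hv] at h ⊢
    · exact h
    · have : 3 * a = 3 * b + 1 := by exact_mod_cast h
      omega
    · have : 3 * a + 1 = 3 * b := by exact_mod_cast h
      omega
    · exact h
  have hcard : s.card = 2 * n + 2 := by simp [hs, card_disjSum]; ring
  have hdeg : P.degree < s.card := by
    rw [hcard]
    refine lt_of_le_of_lt Polynomial.degree_le_natDegree ?_
    exact_mod_cast (by omega : P.natDegree < 2 * n + 2)
  have h := Lagrange.coeff_eq_sum hinj hdeg
  rw [Polynomial.coeff_eq_zero_of_natDegree_lt (by omega), hs, sum_disjSum] at h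
  have eL : ∀ k, ((range (n + 1)).disjSum (range (n + 1))).erase (Sum.inl k) =
      ((range (n + 1)).erase k).disjSum (range (n + 1)) := by
    intro k; ext (a | a) <;> simp
  have eR : ∀ k, ((range (n + 1)).disjSum (range (n + 1))).erase (Sum.inr k) =
      (range (n + 1)).disjSum ((range (n + 1)).erase k) := by
    intro k; ext (a | a) <;> simp
  rw [← sum_add_distrib] at h
  have key : ∀ k ∈ range (n + 1), ((pc n k : ℚ) * P.eval (3 * (k:ℚ) + 1) -
      (pc n (n - k) : ℚ) * P.eval (3 * (k:ℚ))) = (9 ^ n * QA n * QB n) *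
      (P.eval (v (Sum.inl k)) / ∏ j ∈ s.erase (Sum.inl k), (v (Sum.inl k) - v j) +
       P.eval (v (Sum.inr k)) / ∏ j ∈ s.erase (Sum.inr k), (v (Sum.inr k) - v j)) := by
    intro k hk
    simp at hk
    obtain ⟨m, rfl⟩ := Nat.exists_eq_add_of_le hk
    rw [hs, eL, eR, prod_disjSum, prod_disjSum]
    simp only [hv, Sum.elim_inl, Sum.elim_inr]
    rw [prodE, prodL, prodR]
    have hE2 : ∏ x ∈ (range (k + m + 1)).erase k, (3 * (k:ℚ) + 1 - (3 * x + 1)) =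
        (-1) ^ m * 3 ^ (k + m) * k.factorial * m.factorial := by
      rw [← prodE]; apply prod_congr rfl; intro i _; ring
    rw [hE2, pc_cast, Nat.add_sub_cancel_left]
    have h2 := pc_cast m k
    rw [add_comm m k] at h2
    rw [h2]
    have := (QA_pos m).ne'
    have := (QB_pos k).ne'
    have := (QA_pos k).ne'
    have := (QB_pos m).ne'
    have : (k.factorial : ℚ) ≠ 0 := by exact_mod_cast Nat.factorial_ne_zero k
    have : (m.factorial : ℚ) ≠ 0 := by exact_mod_cast Nat.factorial_ne_zero m
    have h9 : (9:ℚ) ^ (k + m) = 3 ^ (k + m) * 3 ^ (k + m) := by rw [← mul_pow]; norm_num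
    rw [h9]
    have hsq : ((-1:ℚ) ^ m) * (-1) ^ m = 1 := by rw [← mul_pow]; norm_num
    have e1 : (-1:ℚ) ^ m * 3 ^ (k + m) * k.factorial * m.factorial * ((-1) ^ (m + 1) * QA k * QB m)
        = -(3 ^ (k + m) * k.factorial * m.factorial * (QA k * QB m)) := by
      rw [pow_succ]; linear_combination (-(3 ^ (k + m) * k.factorial * m.factorial * (QA k * QB m))) * hsq
    have e2 : (-1:ℚ) ^ m * QB k * QA m * ((-1) ^ m * 3 ^ (k + m) * k.factorial * m.factorial)
        = (3 ^ (k + m) * k.factorial * m.factorial * (QB k * QA m)) := by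
      linear_combination ((3 ^ (k + m) * k.factorial * m.factorial * (QB k * QA m))) * hsq
    rw [e1, e2]
    field_simp
    ring
  rw [sum_congr rfl key, ← mul_sum, ← h, mul_zero]

/-- Taylor coefficients at 1 -/
def sc (n j : ℕ) : ℤ := ∑ k ∈ range (n + 1),
  ((pc n k : ℤ) * (Nat.choose (3 * k + 1) j : ℤ) - (pc n (n - k) : ℤ) * (Nat.choose (3 * k) j : ℤ))

lemma sc_zero (n j : ℕ) (hj : j ≤ 2 * n) : sc n j = 0 := by
  have h := pade_vanish_rat n (descPochhammer ℚ j) (by rw [descPochhammer_natDegree]; exact hj)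
  have e1 : ∀ k : ℕ, (descPochhammer ℚ j).eval (3 * (k:ℚ) + 1) = j.factorial * (Nat.choose (3 * k + 1) j : ℚ) := by
    intro k
    have := descPochhammer_eval_eq_descFactorial ℚ (3 * k + 1) j
    rw [Nat.descFactorial_eq_factorial_mul_choose] at this
    push_cast at this; exact this
  have e2 : ∀ k : ℕ, (descPochhammer ℚ j).eval (3 * (k:ℚ)) = j.factorial * (Nat.choose (3 * k) j : ℚ) := by
    intro k
    have := descPochhammer_eval_eq_descFactorial ℚ (3 * k) j
    rw [Nat.descFactorial_eq_factorial_mul_choose] at this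
    push_cast at this; exact this
  simp only [e1, e2] at h
  have hf : (j.factorial : ℚ) ≠ 0 := by exact_mod_cast Nat.factorial_ne_zero j
  have h3 : (j.factorial : ℚ) * (sc n j : ℚ) = 0 := by
    rw [← h, sc]; push_cast; rw [mul_sum]
    apply sum_congr rfl; intro k _; ring
  have := (mul_eq_zero.1 h3).resolve_left hf
  exact_mod_cast this

lemma sc_le (n j : ℕ) : |sc n j| ≤ 1000 ^ (n + 1) := by
  rw [sc]
  refine (abs_sum_le_sum_abs _ _).trans ?_
  have : ∀ k ∈ range (n + 1), |((pc n k : ℤ) * (Nat.choose (3 * k + 1) j : ℤ) -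
      (pc n (n - k) : ℤ) * (Nat.choose (3 * k) j : ℤ))| ≤ 32 * 288 ^ n := by
    intro k hk
    simp at hk
    have h1 : (pc n k : ℤ) ≤ 8 * 36 ^ n := by exact_mod_cast pc_le n k (by omega)
    have h2 : (pc n (n - k) : ℤ) ≤ 8 * 36 ^ n := by exact_mod_cast pc_le n (n - k) (by omega)
    have h3 : (Nat.choose (3 * k + 1) j : ℤ) ≤ 2 * 8 ^ n := by
      have : Nat.choose (3 * k + 1) j ≤ 2 * 8 ^ n := by
        refine (Nat.choose_le_two_pow _ _).trans ?_
        rw [show (8:ℕ) = 2 ^ 3 by norm_num, ← pow_mul, ← pow_succ']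
        exact Nat.pow_le_pow_right (by norm_num) (by omega)
      exact_mod_cast this
    have h4 : (Nat.choose (3 * k) j : ℤ) ≤ 2 * 8 ^ n := by
      have : Nat.choose (3 * k) j ≤ 2 * 8 ^ n := by
        refine (Nat.choose_le_two_pow _ _).trans ?_
        rw [show (8:ℕ) = 2 ^ 3 by norm_num, ← pow_mul, ← pow_succ']
        exact Nat.pow_le_pow_right (by norm_num) (by omega)
      exact_mod_cast this
    have m1 : (pc n k : ℤ) * (Nat.choose (3 * k + 1) j : ℤ) ≤ (8 * 36 ^ n) * (2 * 8 ^ n) :=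
      mul_le_mul h1 h3 (by positivity) (by positivity)
    have m2 : (pc n (n - k) : ℤ) * (Nat.choose (3 * k) j : ℤ) ≤ (8 * 36 ^ n) * (2 * 8 ^ n) :=
      mul_le_mul h2 h4 (by positivity) (by positivity)
    have e : ((8 * 36 ^ n) * (2 * 8 ^ n) : ℤ) = 16 * 288 ^ n := by
      rw [show (288:ℤ) = 36 * 8 by norm_num, mul_pow]; ring
    have p1 : (0:ℤ) ≤ (pc n k : ℤ) * (Nat.choose (3 * k + 1) j : ℤ) := by positivity
    have p2 : (0:ℤ) ≤ (pc n (n - k) : ℤ) * (Nat.choose (3 * k) j : ℤ) := by positivity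
    have p3 : (0:ℤ) ≤ 288 ^ n := by positivity
    rw [abs_le]; constructor <;> linarith
  refine (sum_le_sum this).trans ?_
  rw [sum_const, card_range, nsmul_eq_mul]
  have h2 : ((n + 1 : ℕ) : ℤ) ≤ 2 ^ n := by
    exact_mod_cast Nat.lt_two_pow_self (n := n)
  calc ((n + 1 : ℕ) : ℤ) * (32 * 288 ^ n) ≤ 2 ^ n * (32 * 288 ^ n) := by gcongr
    _ = 32 * 576 ^ n := by rw [show (576:ℤ) = 2 * 288 by norm_num, mul_pow]; ring
    _ ≤ 1000 * 1000 ^ n := by gcongr <;> norm_num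
    _ = 1000 ^ (n + 1) := by ring

lemma pc_le' (n k : ℕ) (hk : k ≤ n) : |(pc n k : ℤ)| ≤ 1000 ^ (n + 1) := by
  rw [abs_of_nonneg (by positivity)]
  have : pc n k ≤ 1000 ^ (n + 1) := (pc_le n k hk).trans (by
    rw [pow_succ']; gcongr <;> norm_num)
  exact_mod_cast this

section
variable {K : Type*} [CommRing K]

/-- Padé numerator -/
def PP (n : ℕ) (x : K) : K := ∑ k ∈ range (n + 1), (pc n k : K) * x ^ k
def QQ (n : ℕ) (x : K) : K := ∑ k ∈ range (n + 1), (pc n (n - k) : K) * x ^ k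

lemma pade_identity (n : ℕ) (u : K) :
    u * PP n (u ^ 3) - QQ n (u ^ 3) =
      ∑ j ∈ range (n + 1), (sc n (2 * n + 1 + j) : K) * (u - 1) ^ (2 * n + 1 + j) := by
  have hpow : ∀ e, e ≤ 3 * n + 1 → u ^ e = ∑ j ∈ range (3 * n + 2), (Nat.choose e j : K) * (u - 1) ^ j := by
    intro e he
    conv_lhs => rw [show u = (u - 1) + 1 by ring, add_pow]
    have : range (e + 1) ⊆ range (3 * n + 2) := by
      intro x; simp; omega
    rw [← sum_subset this]
    · apply sum_congr rfl; intro j _; simp; ring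
    · intro x _ hx
      simp at hx
      rw [Nat.choose_eq_zero_of_lt (by omega)]; simp
  have h1 : u * PP n (u ^ 3) - QQ n (u ^ 3) = ∑ j ∈ range (3 * n + 2), (sc n j : K) * (u - 1) ^ j := by
    rw [PP, QQ, mul_sum, ← sum_sub_distrib]
    have : ∀ k ∈ range (n + 1), u * ((pc n k : K) * (u ^ 3) ^ k) - (pc n (n - k) : K) * (u ^ 3) ^ k =
        ∑ j ∈ range (3 * n + 2), ((pc n k : K) * (Nat.choose (3 * k + 1) j : K) -
          (pc n (n - k) : K) * (Nat.choose (3 * k) j : K)) * (u - 1) ^ j := by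
      intro k hk
      simp at hk
      have a1 := hpow (3 * k + 1) (by omega)
      have a2 := hpow (3 * k) (by omega)
      calc _ = (pc n k : K) * u ^ (3 * k + 1) - (pc n (n - k) : K) * u ^ (3 * k) := by
            rw [← pow_mul, pow_succ]; ring
        _ = _ := by
          rw [a1, a2, mul_sum, mul_sum, ← sum_sub_distrib]
          apply sum_congr rfl; intro j _; ring
    rw [sum_congr rfl this, sum_comm]
    apply sum_congr rfl; intro j _
    rw [← sum_mul, sc]; push_cast; rfl
  rw [h1, show 3 * n + 2 = (2 * n + 1) + (n + 1) by ring, sum_range_add]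
  rw [sum_eq_zero, zero_add]
  intro j hj
  simp at hj
  rw [sc_zero n j (by omega)]; simp

lemma PP_map {A B : Type*} [CommRing A] [CommRing B] (f : A →+* B) (n : ℕ) (x : A) :
    f (PP n x) = PP n (f x) := by simp [PP]

lemma QQ_map {A B : Type*} [CommRing A] [CommRing B] (f : A →+* B) (n : ℕ) (x : A) :
    f (QQ n x) = QQ n (f x) := by simp [QQ]

lemma pade_dvd (n : ℕ) (u : K) :
    (u - 1) ^ (2 * n + 1) ∣ u * PP n (u ^ 3) - QQ n (u ^ 3) := by
  rw [pade_identity]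
  apply dvd_sum
  intro j _
  exact (Dvd.intro _ (pow_add (u - 1) (2 * n + 1) j).symm).mul_left _

lemma det_zero (n : ℕ) : (pc n 0 : ℚ) * pc (n + 1) (n + 1) - pc (n + 1) 0 * pc n n ≠ 0 := by
  have a := pc_cast 0 n
  have b := pc_cast n 0
  have c := pc_cast 0 (n + 1)
  have d := pc_cast (n + 1) 0
  simp only [zero_add, add_zero] at a b c d
  rw [a, b, c, d]
  have hA : QA (n + 1) = QA n * (3 * n + 2) := by rw [QA, prod_range_succ, ← QA]
  have hB : QB (n + 1) = QB n * (3 * n + 4) := by rw [QB, prod_range_succ, ← QB]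
  have h0 : QA 0 = 1 := by simp [QA]
  have h0' : QB 0 = 1 := by simp [QB]
  have := QA_pos n
  have := QB_pos n
  have : (0:ℚ) < n.factorial := by exact_mod_cast Nat.factorial_pos n
  have : (0:ℚ) < (n + 1).factorial := by exact_mod_cast Nat.factorial_pos (n + 1)
  have e : 3 ^ n * QA n * QB n / (((Nat.factorial 0 : ℕ) : ℚ) * n.factorial * QB 0 * QA n) *
      (3 ^ (n + 1) * QA (n + 1) * QB (n + 1) /
        ((n + 1).factorial * ((Nat.factorial 0 : ℕ) : ℚ) * QB (n + 1) * QA 0)) -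
      3 ^ (n + 1) * QA (n + 1) * QB (n + 1) /
        (((Nat.factorial 0 : ℕ) : ℚ) * (n + 1).factorial * QB 0 * QA (n + 1)) *
      (3 ^ n * QA n * QB n / (n.factorial * ((Nat.factorial 0 : ℕ) : ℚ) * QB n * QA 0)) =
      -(2 * 3 ^ n * 3 ^ (n + 1) * QA n * QB n / (n.factorial * (n + 1).factorial)) := by
    rw [hA, hB, h0, h0']
    simp only [Nat.factorial_zero, Nat.cast_one]
    field_simp
    ring
  rw [e]
  exact (neg_neg_of_pos (by positivity)).ne
end

open Polynomial in
lemma pade_det {K : Type*} [Field K] [CharZero K] (n : ℕ) (x : K) (hx : x ≠ 1) :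
    PP n x * QQ (n + 1) x - PP (n + 1) x * QQ n x ≠ 0 := by
  set D : K[X] := PP n X * QQ (n + 1) X - PP (n + 1) X * QQ n X with hD
  have hev : ∀ y : K, D.eval y = PP n y * QQ (n + 1) y - PP (n + 1) y * QQ n y := by
    intro y
    have h := fun m => PP_map (evalRingHom y) m X
    have h' := fun m => QQ_map (evalRingHom y) m X
    simp only [coe_evalRingHom, eval_X] at h h'
    rw [hD]; simp only [eval_sub, eval_mul, h, h']
  have hcomp : D.comp (X ^ 3) = PP n (X ^ 3) * QQ (n + 1) (X ^ 3) - PP (n + 1) (X ^ 3) * QQ n (X ^ 3) := by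
    have h := fun m => PP_map (compRingHom (X ^ 3 : K[X])) m X
    have h' := fun m => QQ_map (compRingHom (X ^ 3 : K[X])) m X
    simp only [coe_compRingHom_apply, X_comp] at h h'
    rw [hD]; simp only [sub_comp, mul_comp, h, h']
  have hP : ∀ m, (PP m (X : K[X])).natDegree ≤ m := by
    intro m
    apply natDegree_sum_le_of_forall_le
    intro k hk
    simp at hk
    refine (natDegree_mul_le).trans ?_
    rw [natDegree_natCast, natDegree_X_pow]; omega
  have hQ : ∀ m, (QQ m (X : K[X])).natDegree ≤ m := by
    intro m
    apply natDegree_sum_le_of_forall_le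
    intro k hk
    simp at hk
    refine (natDegree_mul_le).trans ?_
    rw [natDegree_natCast, natDegree_X_pow]; omega
  have hdeg : D.natDegree ≤ 2 * n + 1 := by
    refine (natDegree_sub_le _ _).trans (max_le ?_ ?_)
    · refine natDegree_mul_le.trans ?_
      have := hP n; have := hQ (n + 1); omega
    · refine natDegree_mul_le.trans ?_
      have := hP (n + 1); have := hQ n; omega
  have hD0 : D.eval 0 ≠ 0 := by
    rw [hev]
    have h1 : ∀ m, PP m (0:K) = pc m 0 := by
      intro m; rw [PP, sum_range_succ']; simp
    have h2 : ∀ m, QQ m (0:K) = pc m m := by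
      intro m; rw [QQ, sum_range_succ']; simp
    rw [h1, h1, h2, h2]
    have := det_zero n
    have h3 : ((((pc n 0 : ℚ) * pc (n + 1) (n + 1) - pc (n + 1) 0 * pc n n) : ℚ) : K) ≠ 0 := by
      exact_mod_cast this
    push_cast at h3; exact h3
  have hDne : D ≠ 0 := by rintro h; rw [h] at hD0; simp at hD0
  obtain ⟨G, hG, hGn⟩ := exists_eq_pow_rootMultiplicity_mul_and_not_dvd D hDne 1
  set m := rootMultiplicity 1 D with hm
  have hG1 : G.eval 1 ≠ 0 := by
    intro h; exact hGn (dvd_iff_isRoot.2 h)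
  have hdvd : (X - 1 : K[X]) ^ (2 * n + 1) ∣ X * D.comp (X ^ 3) := by
    have e : X * D.comp (X ^ 3) = QQ (n + 1) (X ^ 3) * (X * PP n (X ^ 3) - QQ n (X ^ 3)) -
        QQ n (X ^ 3) * (X * PP (n + 1) (X ^ 3) - QQ (n + 1) (X ^ 3)) := by rw [hcomp]; ring
    rw [e]
    apply dvd_sub
    · exact (pade_dvd n X).mul_left _
    · refine (dvd_trans (pow_dvd_pow _ ?_) (pade_dvd (n + 1) X)).mul_left _
      omega
  have hmge : 2 * n + 1 ≤ m := by
    by_contra hlt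
    push Not at hlt
    have e : X * D.comp (X ^ 3) = (X - 1) ^ m * (X * (X ^ 2 + X + 1) ^ m * G.comp (X ^ 3)) := by
      conv_lhs => rw [hG]
      simp only [mul_comp, pow_comp, sub_comp, X_comp, C_1, one_comp]
      rw [show (X ^ 3 - 1 : K[X]) = (X - 1) * (X ^ 2 + X + 1) by ring, mul_pow]; ring
    have h1 : (X - 1 : K[X]) ^ m * (X - 1) ∣ (X - 1) ^ m * (X * (X ^ 2 + X + 1) ^ m * G.comp (X ^ 3)) := by
      rw [← e, ← pow_succ]
      exact dvd_trans (pow_dvd_pow _ hlt) hdvd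
    have hne : (X - 1 : K[X]) ^ m ≠ 0 := pow_ne_zero _ (X_sub_C_ne_zero (1:K))
    obtain ⟨W, hW⟩ := (mul_dvd_mul_iff_left hne).1 h1
    have h2 := congrArg (Polynomial.eval 1) hW
    simp at h2
    rcases h2 with h2 | h2
    · norm_num at h2
    · exact hG1 h2
  have hGdeg : G.natDegree = 0 := by
    have hGne : G ≠ 0 := by rintro rfl; simp at hG1
    have := congrArg natDegree hG
    rw [natDegree_mul (pow_ne_zero _ (X_sub_C_ne_zero 1)) hGne, natDegree_pow, natDegree_X_sub_C] at this
    omega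
  rw [← hev, hG, eq_C_of_natDegree_eq_zero hGdeg]
  rw [eq_C_of_natDegree_eq_zero hGdeg] at hG1
  simp at hG1 ⊢
  exact ⟨fun h => absurd (sub_eq_zero.1 h) hx, hG1⟩
end SUnitAux

/-! ### Part 2: the abstract finiteness theorem -/
namespace SUnitAux
open Finset

/-- A field with finitely many norms and a ring of S-integers. -/
structure Pl (K : Type*) [Field K] (ι : Type*) [Fintype ι] where
  N : ι → K →*₀ ℝ
  nonneg : ∀ i x, 0 ≤ N i x
  add : ∀ i x y, N i (x + y) ≤ 4 * max (N i x) (N i y)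
  int : ∀ i (m : ℤ) (B : ℝ), 1 ≤ B → |(m : ℝ)| ≤ B → N i (m : K) ≤ B ^ 2
  R : Subring K
  prod : ∀ x ∈ R, x ≠ 0 → 1 ≤ ∏ i, N i x
  north : ∀ B : ℝ, {x | x ∈ R ∧ ∀ i, N i x ≤ B}.Finite

section place
variable {K : Type*} [Field K] (N : K →*₀ ℝ) (hN : ∀ x, 0 ≤ N x)
  (hadd : ∀ x y, N (x + y) ≤ 4 * max (N x) (N y))
  (hhInt : ∀ (m : ℤ) (B : ℝ), 1 ≤ B → |(m : ℝ)| ≤ B → N (m : K) ≤ B ^ 2)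

include hN in
lemma N_rootone {ω : K} {r : ℕ} (hr : r ≠ 0) (hω : ω ^ r = 1) : N ω = 1 := by
  have h : (N ω) ^ r = 1 := by rw [← map_pow, hω, map_one]
  exact (pow_eq_one_iff_of_nonneg (hN ω) hr).1 h

include hN in
lemma N_neg (x : K) : N (-x) = N x := by
  have h : N (-1 : K) = 1 := N_rootone N hN (r := 2) (by norm_num) (by norm_num)
  rw [neg_eq_neg_one_mul, map_mul, h, one_mul]

include hN hadd in
lemma N_sub (x y : K) : N (x - y) ≤ 4 * max (N x) (N y) := by
  rw [sub_eq_add_neg]; refine (hadd _ _).trans ?_; rw [N_neg N hN]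

include hadd in
lemma N_sum (n : ℕ) (f : ℕ → K) (B : ℝ) (hB : 0 ≤ B) (h : ∀ j < n, N (f j) ≤ B) :
    N (∑ j ∈ range n, f j) ≤ 4 ^ n * B := by
  induction n with
  | zero => simpa using hB
  | succ n ih =>
    rw [sum_range_succ]
    refine (hadd _ _).trans ?_
    have h1 := ih fun j hj => h j (by omega)
    have h2 := h n (by omega)
    have h3 : B ≤ 4 ^ n * B := le_mul_of_one_le_left hB (one_le_pow₀ (by norm_num))
    rw [pow_succ]
    have := max_le h1 (h2.trans h3)
    linarith

include hN hadd hhInt in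
lemma delta_bound (n : ℕ) (u u' : K) (d d' D : ℝ) (hd : 0 ≤ d)
    (h1 : N (u - 1) ≤ d * max 1 (N u)) (h2 : N (u' - 1) ≤ d' * max 1 (N u'))
    (hD : d ^ (2 * n + 1) ≤ D) (hD' : d' ≤ D) :
    N (u * PP n (u ^ 3) - u' * QQ n (u ^ 3)) ≤
      (10 ^ 8) ^ (n + 1) * (max 1 (N u)) ^ (3 * n + 1) * max 1 (N u') * D := by
  set M := max 1 (N u) with hM
  set M' := max 1 (N u') with hM'
  have hM1 : 1 ≤ M := le_max_left _ _
  have hM1' : 1 ≤ M' := le_max_left _ _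
  have hD0 : 0 ≤ D := (pow_nonneg hd _).trans hD
  have hu4 : N (u - 1) ≤ 4 * M := by
    refine (N_sub N hN hadd _ _).trans ?_
    rw [map_one, max_comm]
  have hC : (1:ℝ) ≤ 1000 ^ (n + 1) := one_le_pow₀ (by norm_num)
  have b1 : N (u * PP n (u ^ 3) - QQ n (u ^ 3)) ≤
      4 ^ (n + 1) * ((1000 ^ (n + 1)) ^ 2 * (4 ^ n * M ^ (3 * n + 1) * D)) := by
    rw [pade_identity]
    apply N_sum N hadd _ _ _ (by positivity)
    intro j hj
    rw [map_mul, map_pow]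
    have i1 : N ((sc n (2 * n + 1 + j) : ℤ) : K) ≤ (1000 ^ (n + 1)) ^ 2 := by
      apply hhInt _ _ hC
      exact_mod_cast sc_le n _
    refine mul_le_mul i1 ?_ (pow_nonneg (hN _) _) (by positivity)
    rw [pow_add]
    calc N (u - 1) ^ (2 * n + 1) * N (u - 1) ^ j ≤ (d * M) ^ (2 * n + 1) * (4 * M) ^ j := by
          gcongr
          all_goals first | exact pow_nonneg (hN _) _ | exact hN _
      _ ≤ (d * M) ^ (2 * n + 1) * (4 * M) ^ n := by
          gcongr
          · linarith
          · omega
      _ = 4 ^ n * M ^ (3 * n + 1) * d ^ (2 * n + 1) := by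
          rw [mul_pow, mul_pow, show 3 * n + 1 = (2 * n + 1) + n by ring, pow_add M]; ring
      _ ≤ _ := by gcongr
  have b2 : N (QQ n (u ^ 3)) ≤ 4 ^ (n + 1) * ((1000 ^ (n + 1)) ^ 2 * M ^ (3 * n)) := by
    rw [QQ]
    apply N_sum N hadd _ _ _ (by positivity)
    intro j hj
    rw [map_mul, map_pow, map_pow]
    have i1 : N ((pc n (n - j) : ℕ) : K) ≤ (1000 ^ (n + 1)) ^ 2 := by
      have := hhInt (pc n (n - j) : ℤ) _ hC (by exact_mod_cast pc_le' n (n - j) (by omega))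
      simpa using this
    refine mul_le_mul i1 ?_ (pow_nonneg (pow_nonneg (hN _) _) _) (by positivity)
    rw [← pow_mul]
    calc N u ^ (3 * j) ≤ M ^ (3 * j) := by
          gcongr
          · exact hN _
          · exact le_max_right _ _
      _ ≤ M ^ (3 * n) := by
          gcongr
          · omega
  have e : u * PP n (u ^ 3) - u' * QQ n (u ^ 3) =
      (u * PP n (u ^ 3) - QQ n (u ^ 3)) - (u' - 1) * QQ n (u ^ 3) := by ring
  rw [e]
  refine (N_sub N hN hadd _ _).trans ?_
  rw [map_mul]
  have c1 : N (u * PP n (u ^ 3) - QQ n (u ^ 3)) ≤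
      4 ^ (n + 1) * ((1000 ^ (n + 1)) ^ 2 * (4 ^ n * M ^ (3 * n + 1) * D)) * M' :=
    b1.trans (le_mul_of_one_le_right (by positivity) hM1')
  have c2 : N (u' - 1) * N (QQ n (u ^ 3)) ≤
      4 ^ (n + 1) * ((1000 ^ (n + 1)) ^ 2 * (4 ^ n * M ^ (3 * n + 1) * D)) * M' := by
    calc _ ≤ (D * M') * (4 ^ (n + 1) * ((1000 ^ (n + 1)) ^ 2 * M ^ (3 * n))) := by
          refine mul_le_mul (h2.trans (by gcongr)) b2 (hN _) (by positivity)
      _ ≤ (D * M') * (4 ^ (n + 1) * ((1000 ^ (n + 1)) ^ 2 * (4 ^ n * M ^ (3 * n + 1)))) := by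
          gcongr
          rw [pow_succ M]
          have : (1:ℝ) ≤ 4 ^ n := one_le_pow₀ (by norm_num)
          calc M ^ (3 * n) = 1 * (M ^ (3 * n) * 1) := by ring
            _ ≤ 4 ^ n * (M ^ (3 * n) * M) := by gcongr
      _ = _ := by ring
  have := max_le c1 c2
  calc _ ≤ 4 * (4 ^ (n + 1) * ((1000 ^ (n + 1)) ^ 2 * (4 ^ n * M ^ (3 * n + 1) * D)) * M') := by linarith
    _ = (4 ^ (n + 1) * 4 ^ (n + 1) * (1000 ^ (n + 1)) ^ 2) * M ^ (3 * n + 1) * M' * D := by ring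
    _ ≤ _ := by
      have : ((4:ℝ) ^ (n + 1) * 4 ^ (n + 1) * (1000 ^ (n + 1)) ^ 2) ≤ (10 ^ 8) ^ (n + 1) := by
        rw [← pow_mul, mul_comm (n + 1) 2, pow_mul, ← mul_pow, ← mul_pow]
        gcongr; norm_num
      gcongr

include hN hadd in
lemma nearest {ω : K} (hω : ω ^ 2 + ω + 1 = 0) (ξ : K) :
    ∃ k : Fin 3, N (1 - ω) ^ 2 * (max 1 (N ξ)) ^ 2 * N (ω ^ (k : ℕ) * ξ - 1) ≤ 16 * N (1 - ξ ^ 3) := by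
  have hω3 : ω ^ 3 = 1 := by linear_combination (ω - 1) * hω
  have hNω : N ω = 1 := N_rootone N hN (by norm_num) hω3
  set l := N (1 - ω) with hl
  set M := max 1 (N ξ) with hM
  have hl0 : 0 ≤ l := hN _
  have hM0 : 0 ≤ M := zero_le_one.trans (le_max_left _ _)
  have fac : N (1 - ξ ^ 3) = N (ξ - 1) * N (ω * ξ - 1) * N (ω ^ 2 * ξ - 1) := by
    rw [← map_mul, ← map_mul, ← N_neg N hN]
    congr 1
    linear_combination (-(ξ ^ 3) * (ω - 1) - ξ + ξ ^ 2 * ω) * hω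
  -- pairs
  have pair : ∀ a b : K, N a = 1 → N b = 1 → N (a - b) = l →
      l * M ≤ 4 * max (N (a * ξ - 1)) (N (b * ξ - 1)) := by
    intro a b ha hb hab
    have h1 : l ≤ 4 * max (N (a * ξ - 1)) (N (b * ξ - 1)) := by
      have := N_sub N hN hadd (b * (a * ξ - 1)) (a * (b * ξ - 1))
      rw [map_mul, map_mul, ha, hb, one_mul, one_mul] at this
      rw [← hab]
      convert! this using 2; ring
    have h2 : l * N ξ ≤ 4 * max (N (a * ξ - 1)) (N (b * ξ - 1)) := by
      have := N_sub N hN hadd (a * ξ - 1) (b * ξ - 1)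
      rw [← hab, ← map_mul]
      convert! this using 2; ring
    rw [hM, mul_max_of_nonneg _ _ hl0, mul_one]
    exact max_le h1 h2
  have p01 := pair 1 ω (map_one _) hNω rfl
  have p12 := pair ω (ω ^ 2) hNω (by rw [map_pow, hNω, one_pow]) (by
    rw [show ω - ω ^ 2 = ω * (1 - ω) by ring, map_mul, hNω, one_mul])
  have p02 := pair 1 (ω ^ 2) (map_one _) (by rw [map_pow, hNω, one_pow]) (by
    rw [show 1 - ω ^ 2 = -(ω ^ 2 * (1 - ω)) by linear_combination (1 - ω) * hω,
      N_neg N hN, map_mul, map_pow, hNω, one_pow, one_mul])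
  rw [one_mul] at p01 p02
  set a := N (ξ - 1) with ha
  set b := N (ω * ξ - 1) with hb
  set c := N (ω ^ 2 * ξ - 1) with hc
  have a0 : 0 ≤ a := hN _
  have b0 : 0 ≤ b := hN _
  have c0 : 0 ≤ c := hN _
  have lM0 : 0 ≤ l * M := mul_nonneg hl0 hM0
  have fin : ∀ x y z : ℝ, 0 ≤ x → 0 ≤ y → 0 ≤ z → x ≤ y → x ≤ z → l * M ≤ 4 * max x y →
      l * M ≤ 4 * max x z → l ^ 2 * M ^ 2 * x ≤ 16 * (x * y * z) := by
    intro x y z hx hy hz hxy hxz h1 h2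
    rw [max_eq_right hxy] at h1
    rw [max_eq_right hxz] at h2
    have := mul_le_mul h1 h2 lM0 (by linarith)
    calc l ^ 2 * M ^ 2 * x = (l * M * (l * M)) * x := by ring
      _ ≤ (4 * y * (4 * z)) * x := by gcongr
      _ = _ := by ring
  rw [fac]
  rcases le_total a b with hab | hab
  · rcases le_total a c with hac | hac
    · exact ⟨0, by simpa using fin a b c a0 b0 c0 hab hac p01 p02⟩
    · refine ⟨2, ?_⟩
      have := fin c a b c0 a0 b0 hac (hac.trans hab) (by rwa [max_comm]) (by rwa [max_comm])
      calc _ ≤ _ := this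
        _ = _ := by ring
  · rcases le_total b c with hbc | hbc
    · refine ⟨1, ?_⟩
      have := fin b a c b0 a0 c0 hab hbc (by rwa [max_comm]) p12
      simp only [Fin.val_one, pow_one]
      calc _ ≤ _ := this
        _ = _ := by ring
    · refine ⟨2, ?_⟩
      have := fin c a b c0 a0 b0 (hbc.trans hab) hbc (by rwa [max_comm]) (by rwa [max_comm])
      calc _ ≤ _ := this
        _ = _ := by ring
end place

section glob
variable {K : Type*} [Field K] {ι : Type*} [Fintype ι] (V : Pl K ι)

/-- height -/
noncomputable def Pl.h (x : K) : ℝ := ∏ i, max 1 (V.N i x)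

lemma Pl.h_one_le (x : K) : 1 ≤ V.h x := by
  rw [Pl.h]
  calc (1:ℝ) = ∏ i : ι, 1 := by simp
    _ ≤ _ := prod_le_prod (fun _ _ => zero_le_one) (fun i _ => le_max_left _ _)

lemma Pl.le_h (x : K) (i : ι) : V.N i x ≤ V.h x := by
  classical
  rw [Pl.h, ← mul_prod_erase univ _ (mem_univ i)]
  have h1 : (1:ℝ) ≤ ∏ j ∈ univ.erase i, max 1 (V.N j x) := by
    calc (1:ℝ) = ∏ j ∈ univ.erase i, 1 := by simp
      _ ≤ _ := prod_le_prod (fun _ _ => zero_le_one) (fun i _ => le_max_left _ _)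
  calc V.N i x ≤ max 1 (V.N i x) := le_max_right _ _
    _ ≤ _ := le_mul_of_one_le_right (zero_le_one.trans (le_max_left _ _)) h1

lemma Pl.finite_h (B : ℝ) : {x | x ∈ V.R ∧ V.h x ≤ B}.Finite :=
  (V.north B).subset fun x hx => ⟨hx.1, fun i => (V.le_h x i).trans hx.2⟩

/-- the set of solutions in one class -/
def Pl.cls (ω : K) (k : ι → ℕ) (g : ι → ℝ) : Set K :=
  {ξ | ξ ∈ V.R ∧ ξ ≠ 0 ∧ ξ ^ 3 ≠ 1 ∧ ∀ i, V.N i (ω ^ (k i) * ξ - 1) ≤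
    4 * Real.exp (-(g i * Real.log (V.h ξ))) * max 1 (V.N i ξ)}

lemma PP_mem (R : Subring K) (n : ℕ) (x : K) (hx : x ∈ R) : PP n x ∈ R :=
  sum_mem fun k _ => R.mul_mem (natCast_mem R _) (R.pow_mem hx _)

lemma QQ_mem (R : Subring K) (n : ℕ) (x : K) (hx : x ∈ R) : QQ n x ∈ R :=
  sum_mem fun k _ => R.mul_mem (natCast_mem R _) (R.pow_mem hx _)

/-- key inequality -/
lemma Pl.key (ω : K) (hω3 : ω ^ 3 = 1) (k : ι → ℕ) (g : ι → ℝ) (hg : ∀ i, 0 ≤ g i)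
    (ξ₁ ξ₂ : K) (h₁ : ξ₁ ∈ V.cls ω k g) (h₂ : ξ₂ ∈ V.cls ω k g) (n : ℕ)
    (hn : (2 * n + 1) * Real.log (V.h ξ₁) ≤ Real.log (V.h ξ₂))
    (hne : ξ₁ * PP n (ξ₁ ^ 3) - ξ₂ * QQ n (ξ₁ ^ 3) ≠ 0) :
    0 ≤ Fintype.card ι * ((n + 1) * Real.log (10 ^ 10)) + (3 * n + 1) * Real.log (V.h ξ₁) +
      Real.log (V.h ξ₂) - (2 * n + 1) * (∑ i, g i) * Real.log (V.h ξ₁) := by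
  set ℓ₁ := Real.log (V.h ξ₁) with hℓ₁
  set ℓ₂ := Real.log (V.h ξ₂) with hℓ₂
  have hℓ0 : 0 ≤ ℓ₁ := Real.log_nonneg (V.h_one_le _)
  set Δ := ξ₁ * PP n (ξ₁ ^ 3) - ξ₂ * QQ n (ξ₁ ^ 3) with hΔ
  have hΔR : Δ ∈ V.R := V.R.sub_mem
    (V.R.mul_mem h₁.1 (PP_mem _ _ _ (V.R.pow_mem h₁.1 _)))
    (V.R.mul_mem h₂.1 (QQ_mem _ _ _ (V.R.pow_mem h₁.1 _)))
  have hprod := V.prod Δ hΔR hne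
  have hNpos : ∀ i, 0 < V.N i Δ := fun i =>
    lt_of_le_of_ne (V.nonneg i _) (Ne.symm ((map_ne_zero _).2 hne))
  have hlog : 0 ≤ ∑ i, Real.log (V.N i Δ) := by
    rw [← Real.log_prod (fun i _ => (hNpos i).ne')]
    exact Real.log_nonneg hprod
  have bound : ∀ i, Real.log (V.N i Δ) ≤ ((n + 1) * Real.log (10 ^ 10)) +
      (3 * n + 1) * Real.log (max 1 (V.N i ξ₁)) + Real.log (max 1 (V.N i ξ₂)) -
        (2 * n + 1) * g i * ℓ₁ := by
    intro i
    have hNω : V.N i (ω ^ k i) = 1 := by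
      rw [map_pow, N_rootone (V.N i) (V.nonneg i) (by norm_num) hω3, one_pow]
    have hu : ∀ x, V.N i (ω ^ k i * x) = V.N i x := fun x => by rw [map_mul, hNω, one_mul]
    have hu3 : (ω ^ k i * ξ₁) ^ 3 = ξ₁ ^ 3 := by
      rw [mul_pow, ← pow_mul, mul_comm (k i) 3, pow_mul, hω3, one_pow, one_mul]
    have m1 : (1:ℝ) ≤ max 1 (V.N i ξ₁) := le_max_left _ _
    have m2 : (1:ℝ) ≤ max 1 (V.N i ξ₂) := le_max_left _ _
    have := delta_bound (V.N i) (V.nonneg i) (V.add i) (V.int i) n (ω ^ k i * ξ₁) (ω ^ k i * ξ₂)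
      (4 * Real.exp (-(g i * ℓ₁))) (4 * Real.exp (-(g i * ℓ₂)))
      (16 ^ (n + 1) * Real.exp (-((2 * n + 1) * g i * ℓ₁))) (by positivity)
      (by rw [hu]; exact h₁.2.2.2 i) (by rw [hu]; exact h₂.2.2.2 i)
      (by
        rw [mul_pow, ← Real.exp_nat_mul]
        have : (4:ℝ) ^ (2 * n + 1) ≤ 16 ^ (n + 1) := by
          rw [show (16:ℝ) = 4 ^ 2 by norm_num, ← pow_mul]
          exact pow_le_pow_right₀ (by norm_num) (by omega)
        refine mul_le_mul this (le_of_eq ?_) (by positivity) (by positivity)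
        push_cast; ring_nf)
      (by
        have : (4:ℝ) ≤ 16 ^ (n + 1) := by
          rw [pow_succ]
          have : (1:ℝ) ≤ 16 ^ n := one_le_pow₀ (by norm_num)
          linarith
        refine mul_le_mul this ?_ (by positivity) (by positivity)
        apply Real.exp_le_exp.2
        have := mul_le_mul_of_nonneg_left hn (hg i)
        linarith)
    rw [hu3, hu, hu] at this
    have e : ω ^ k i * ξ₁ * PP n (ξ₁ ^ 3) - ω ^ k i * ξ₂ * QQ n (ξ₁ ^ 3) = ω ^ k i * Δ := by
      rw [hΔ]; ring
    rw [e, hu] at this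
    have h3 := Real.log_le_log (hNpos i) this
    rw [Real.log_mul (by positivity) (by positivity), Real.log_mul (by positivity) (by positivity),
      Real.log_mul (by positivity) (by positivity), Real.log_mul (by positivity) (by positivity),
      Real.log_exp, Real.log_pow ((10:ℝ) ^ 8) (n + 1), Real.log_pow _ (3 * n + 1), Real.log_pow (16:ℝ) (n + 1)] at h3
    have h4 : Real.log (10 ^ 8) + Real.log 16 ≤ Real.log (10 ^ 10) := by
      rw [← Real.log_mul (by norm_num) (by norm_num)]
      exact Real.log_le_log (by norm_num) (by norm_num)
    have h5 : ((n:ℝ) + 1) * (Real.log (10 ^ 8) + Real.log 16) ≤ (n + 1) * Real.log (10 ^ 10) := by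
      gcongr
    push_cast at h3
    linarith
  have hsum := hlog.trans (sum_le_sum fun i _ => bound i)
  have l1 : ℓ₁ = ∑ i, Real.log (max 1 (V.N i ξ₁)) := by
    rw [hℓ₁, Pl.h, Real.log_prod]
    intro i _; have : (1:ℝ) ≤ max 1 (V.N i ξ₁) := le_max_left _ _
    positivity
  have l2 : ℓ₂ = ∑ i, Real.log (max 1 (V.N i ξ₂)) := by
    rw [hℓ₂, Pl.h, Real.log_prod]
    intro i _; have : (1:ℝ) ≤ max 1 (V.N i ξ₂) := le_max_left _ _
    positivity
  rw [sum_sub_distrib, sum_add_distrib, sum_add_distrib, sum_const, card_univ, nsmul_eq_mul, ← mul_sum,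
    ← l2, ← l1, ← sum_mul, ← mul_sum] at hsum
  exact hsum

lemma Pl.cls_finite [CharZero K] (ω : K) (hω3 : ω ^ 3 = 1) (k : ι → ℕ) (g : ι → ℝ) (hg : ∀ i, 0 ≤ g i)
    (hsum : 2.9 ≤ ∑ i, g i) : (V.cls ω k g).Finite := by
  by_contra hinf
  have big : ∀ B : ℝ, ∃ ξ ∈ V.cls ω k g, B < V.h ξ := by
    intro B
    by_contra hcon
    push Not at hcon
    exact hinf ((V.finite_h B).subset fun x hx => ⟨hx.1, hcon x hx⟩)
  set A : ℝ := Fintype.card ι * Real.log (10 ^ 10) with hA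
  have hA0 : 0 ≤ A := mul_nonneg (by positivity) (Real.log_nonneg (by norm_num))
  obtain ⟨ξ₁, hξ₁, hb₁⟩ := big (Real.exp (4 * A + 1))
  obtain ⟨ξ₂, hξ₂, hb₂⟩ := big (Real.exp (19 * Real.log (V.h ξ₁)))
  set ℓ₁ := Real.log (V.h ξ₁) with hℓ₁
  set ℓ₂ := Real.log (V.h ξ₂) with hℓ₂
  have hl1 : 4 * A + 1 < ℓ₁ :=
    (Real.lt_log_iff_exp_lt (zero_lt_one.trans_le (V.h_one_le _))).2 hb₁
  have hl2 : 19 * ℓ₁ < ℓ₂ :=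
    (Real.lt_log_iff_exp_lt (zero_lt_one.trans_le (V.h_one_le _))).2 hb₂
  have hpos : 0 < ℓ₁ := by linarith
  obtain ⟨m, hm1, hm2⟩ : ∃ m : ℕ, (2 * (m:ℝ) + 1) * ℓ₁ ≤ ℓ₂ ∧ ℓ₂ < (2 * (m:ℝ) + 3) * ℓ₁ := by
    refine ⟨⌊(ℓ₂ / ℓ₁ - 1) / 2⌋₊, ?_, ?_⟩
    · have h0 : 0 ≤ (ℓ₂ / ℓ₁ - 1) / 2 := by
        have : 19 < ℓ₂ / ℓ₁ := by rw [lt_div_iff₀ hpos]; exact hl2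
        linarith
      have := Nat.floor_le h0
      rw [← le_div_iff₀ hpos]; linarith
    · have := Nat.lt_floor_add_one ((ℓ₂ / ℓ₁ - 1) / 2)
      rw [← div_lt_iff₀ hpos]; linarith
  have hm9 : 9 ≤ m := by
    by_contra hlt
    push Not at hlt
    have : (m:ℝ) ≤ 8 := by exact_mod_cast (by omega : m ≤ 8)
    nlinarith
  have fin : ∀ n : ℕ, 8 ≤ n → (2 * (n:ℝ) + 1) * ℓ₁ ≤ ℓ₂ → ℓ₂ ≤ (2 * (n:ℝ) + 5) * ℓ₁ →
      ξ₁ * PP n (ξ₁ ^ 3) - ξ₂ * QQ n (ξ₁ ^ 3) = 0 := by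
    intro n hn8 hn1 hn2
    by_contra hne
    have := V.key ω hω3 k g hg ξ₁ ξ₂ hξ₁ hξ₂ n hn1 hne
    rw [← hℓ₁, ← hℓ₂] at this
    have hn8' : (8:ℝ) ≤ n := by exact_mod_cast hn8
    have e1 : (Fintype.card ι : ℝ) * (((n:ℝ) + 1) * Real.log (10 ^ 10)) = (n + 1) * A := by rw [hA]; ring
    rw [e1] at this
    have e2 : (2 * (n:ℝ) + 1) * 2.9 * ℓ₁ ≤ (2 * n + 1) * (∑ i, g i) * ℓ₁ := by gcongr
    have e3 : ((n:ℝ) + 1) * (4 * A) ≤ (n + 1) * ℓ₁ := by gcongr; linarith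
    nlinarith
  have z1 := fin m (by omega) hm1 (by nlinarith)
  obtain ⟨r, rfl⟩ : ∃ r, m = r + 1 := ⟨m - 1, by omega⟩
  push_cast at hm1 hm2
  have z0 := fin r (by omega) (by nlinarith) (by nlinarith)
  have := pade_det r (ξ₁ ^ 3) hξ₁.2.2.1
  apply mul_ne_zero hξ₁.2.1 this
  linear_combination QQ (r + 1) (ξ₁ ^ 3) * z0 - QQ r (ξ₁ ^ 3) * z1

theorem Pl.main [CharZero K] (ω : K) (hω : ω ^ 2 + ω + 1 = 0) :
    {ξ | ξ ∈ V.R ∧ ξ ≠ 0 ∧ ξ ^ 3 ≠ 1 ∧ ∏ i, V.N i (1 - ξ ^ 3) ≤ 1}.Finite := by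
  have hω3 : ω ^ 3 = 1 := by linear_combination (ω - 1) * hω
  have hω1 : (1:K) - ω ≠ 0 := by
    intro h
    have : ω = 1 := (sub_eq_zero.1 h).symm
    rw [this] at hω
    norm_num at hω
  set s : ℕ := Fintype.card ι with hs
  set Q : ℕ := 20 * (s + 1) with hQ
  have hlam : ∀ i, 0 < V.N i (1 - ω) := fun i =>
    lt_of_le_of_ne (V.nonneg i _) (Ne.symm ((map_ne_zero _).2 hω1))
  set c : ℝ := ∑ i, (Real.log 16 - 2 * Real.log (V.N i (1 - ω))) with hc
  set B : ℝ := Real.exp (20 * |c| + 1) with hB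
  -- finite union
  have hfin : ((⋃ k : ι → Fin 3, ⋃ f : ι → Fin (4 * Q + 1),
      {ξ | ξ ∈ V.cls ω (fun i => (k i : ℕ)) (fun i => ((f i : ℕ) : ℝ) / Q) ∧
        2.9 ≤ ∑ i, ((f i : ℕ) : ℝ) / Q})).Finite := by
    apply Set.finite_iUnion
    intro k
    apply Set.finite_iUnion
    intro f
    by_cases h : 2.9 ≤ ∑ i, ((f i : ℕ) : ℝ) / Q
    · exact (V.cls_finite ω hω3 _ _ (fun i => by positivity) h).subset fun x hx => hx.1
    · convert! Set.finite_empty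
      ext x; simp only [Set.mem_ofPred_eq, Set.mem_empty_iff_false, iff_false]
      exact fun hx => h hx.2
  refine ((V.finite_h B).union hfin).subset ?_
  rintro ξ ⟨hR, h0, h3, hprod⟩
  by_cases hh : V.h ξ ≤ B
  · exact Or.inl ⟨hR, hh⟩
  right
  push Not at hh
  set ℓ := Real.log (V.h ξ) with hℓ
  have hl : 20 * |c| + 1 < ℓ :=
    (Real.lt_log_iff_exp_lt (zero_lt_one.trans_le (V.h_one_le _))).2 hh
  have hlpos : 0 < ℓ := by have := abs_nonneg c; linarith
  choose k hk using fun i => nearest (V.N i) (V.nonneg i) (V.add i) hω ξ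
  have hQpos : (0:ℝ) < Q := by rw [hQ]; positivity
  set M : ι → ℝ := fun i => max 1 (V.N i ξ) with hM
  have hM1 : ∀ i, 1 ≤ M i := fun i => le_max_left _ _
  set a : ι → ℝ := fun i => V.N i (ω ^ (k i : ℕ) * ξ - 1) with ha
  have hane : ∀ i, ω ^ (k i : ℕ) * ξ - 1 ≠ 0 := by
    intro i h
    apply h3
    have h' : ω ^ (k i : ℕ) * ξ = 1 := sub_eq_zero.1 h
    have : (ω ^ (k i : ℕ) * ξ) ^ 3 = ξ ^ 3 := by
      rw [mul_pow, ← pow_mul, mul_comm (k i : ℕ) 3, pow_mul, hω3, one_pow, one_mul]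
    rw [← this, h', one_pow]
  have hapos : ∀ i, 0 < a i := fun i =>
    lt_of_le_of_ne (V.nonneg i _) (Ne.symm ((map_ne_zero _).2 (hane i)))
  have ha4 : ∀ i, a i ≤ 4 * M i := by
    intro i
    refine (N_sub (V.N i) (V.nonneg i) (V.add i) _ _).trans ?_
    rw [map_one, max_comm, map_mul, map_pow,
      N_rootone (V.N i) (V.nonneg i) (by norm_num) hω3, one_pow, one_mul]
  set e : ι → ℝ := fun i => (Real.log (M i) - Real.log (a i)) / ℓ with he
  have hℓM : ℓ = ∑ i, Real.log (M i) := by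
    rw [hℓ, Pl.h, Real.log_prod]
    intro i _; have := hM1 i; simp only [hM] at this; positivity
  have hypos : ∀ i, 0 < V.N i (1 - ξ ^ 3) := fun i =>
    lt_of_le_of_ne (V.nonneg i _) (Ne.symm ((map_ne_zero _).2 (sub_ne_zero.2 (Ne.symm h3))))
  have hsume : 2.95 ≤ ∑ i, e i := by
    have h1 : ∀ i, 2 * Real.log (V.N i (1 - ω)) + 2 * Real.log (M i) + Real.log (a i) ≤
        Real.log 16 + Real.log (V.N i (1 - ξ ^ 3)) := by
      intro i
      have hMi := hM1 i
      have hli := hlam i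
      have hai := hapos i
      have hyi := hypos i
      have := Real.log_le_log (by positivity) (hk i : _ ^ 2 * (M i) ^ 2 * a i ≤ _)
      rw [Real.log_mul (by positivity) (by positivity), Real.log_mul (by positivity) (by positivity),
        Real.log_mul (by positivity) (by positivity), Real.log_pow, Real.log_pow] at this
      push_cast at this
      exact this
    have h2 := sum_le_sum fun i (_ : i ∈ univ) => h1 i
    have h3 : ∑ i, Real.log (V.N i (1 - ξ ^ 3)) ≤ 0 := by
      rw [← Real.log_prod (fun i _ => (hypos i).ne')]
      exact Real.log_nonpos (prod_nonneg fun i _ => V.nonneg i _) hprod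
    have h4 : ∑ i, e i = (∑ i, Real.log (M i) - ∑ i, Real.log (a i)) / ℓ := by
      rw [← sum_sub_distrib, sum_div]
    rw [h4, le_div_iff₀ hlpos, ← hℓM]
    rw [sum_add_distrib, sum_add_distrib, ← mul_sum, ← mul_sum, ← hℓM, sum_add_distrib] at h2
    rw [sum_sub_distrib, ← mul_sum] at hc
    have := le_abs_self c
    linarith
  have h4Q : (Q:ℝ) = 20 * (s + 1) := by rw [hQ]; push_cast; ring
  -- truncated floors
  set f : ι → Fin (4 * Q + 1) := fun i => ⟨min ⌊Q * e i⌋₊ (4 * Q), by omega⟩ with hf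
  simp only [Set.mem_iUnion]
  refine ⟨k, f, ⟨hR, h0, h3, ?_⟩, ?_⟩
  · intro i
    have hval : ((f i : ℕ) : ℝ) ≤ (⌊Q * e i⌋₊ : ℝ) := by
      exact_mod_cast min_le_left _ _
    change a i ≤ 4 * Real.exp (-(((f i : ℕ) : ℝ) / Q * ℓ)) * M i
    have hMi := hM1 i
    rcases le_total 0 (e i) with hei | hei
    · have h1 := Nat.floor_le (mul_nonneg hQpos.le hei)
      have h2 : ((f i : ℕ) : ℝ) / Q ≤ e i := by
        rw [div_le_iff₀ hQpos]; linarith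
      have h5 : ((f i : ℕ) : ℝ) / Q * ℓ ≤ Real.log (M i) - Real.log (a i) := by
        have := mul_le_mul_of_nonneg_right h2 hlpos.le
        rwa [he, div_mul_cancel₀ _ hlpos.ne'] at this
      have h6 : a i ≤ Real.exp (-(((f i : ℕ) : ℝ) / Q * ℓ)) * M i := by
        rw [← Real.log_le_log_iff (hapos i) (by positivity), Real.log_mul (by positivity) (by positivity),
          Real.log_exp]
        linarith
      have : 0 ≤ Real.exp (-(((f i : ℕ) : ℝ) / Q * ℓ)) * M i := by positivity
      linarith
    · have : ⌊Q * e i⌋₊ = 0 := Nat.floor_of_nonpos (mul_nonpos_of_nonneg_of_nonpos hQpos.le hei)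
      have h1 : (f i : ℕ) = 0 := by simp [hf, this]
      rw [h1]; simpa using ha4 i
  · by_cases hbig : ∃ i, 4 * Q ≤ ⌊Q * e i⌋₊
    · obtain ⟨i, hi⟩ := hbig
      have h1 : (f i : ℕ) = 4 * Q := by simp [hf, hi]
      have h2 : ((f i : ℕ) : ℝ) / Q ≤ ∑ i, ((f i : ℕ) : ℝ) / Q :=
        single_le_sum (f := fun i => ((f i : ℕ) : ℝ) / Q) (fun j _ => by positivity) (mem_univ i)
      refine le_trans ?_ h2
      rw [h1]; push_cast
      rw [mul_div_assoc, div_self hQpos.ne']; norm_num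
    · push Not at hbig
      have h1 : ∀ i, e i - 1 / Q ≤ ((f i : ℕ) : ℝ) / Q := by
        intro i
        have h2 : (f i : ℕ) = ⌊Q * e i⌋₊ := by simp [hf, (hbig i).le]
        rw [h2]
        have := Nat.lt_floor_add_one (Q * e i)
        rw [le_div_iff₀ hQpos, sub_mul, div_mul_cancel₀ _ hQpos.ne']
        linarith
      have h2 := sum_le_sum fun i (_ : i ∈ univ) => h1 i
      rw [sum_sub_distrib, sum_const, card_univ, nsmul_eq_mul, ← hs] at h2
      have h5 : (s:ℝ) * (1 / Q) ≤ 0.05 := by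
        rw [h4Q, mul_one_div, div_le_iff₀ (by positivity)]
        linarith
      linarith
end glob
end SUnitAux

/-! ### Part 3: number fields -/
namespace SUnitAux
open Finset NumberField

section nf
variable (K : Type*) [Field K]

/-- The ring of elements that become integral after multiplication by a power of `M`. -/
def RM (M : ℕ) : Subring K where
  carrier := {x | ∃ k : ℕ, IsIntegral ℤ ((M : K) ^ k * x)}
  mul_mem' := by
    rintro x y ⟨k, hk⟩ ⟨l, hl⟩
    refine ⟨k + l, ?_⟩
    have := hk.mul hl
    convert! this using 1; ring
  one_mem' := ⟨0, by simpa using isIntegral_one⟩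
  zero_mem' := ⟨0, by simpa using isIntegral_zero⟩
  add_mem' := by
    rintro x y ⟨k, hk⟩ ⟨l, hl⟩
    refine ⟨k + l, ?_⟩
    have hM : IsIntegral ℤ (M : K) := by simpa using isIntegral_algebraMap (R := ℤ) (A := K) (x := (M : ℤ))
    have := ((hM.pow l).mul hk).add ((hM.pow k).mul hl)
    convert! this using 1; ring
  neg_mem' := by
    rintro x ⟨k, hk⟩
    refine ⟨k, ?_⟩
    have := hk.neg
    convert! this using 1; ring

variable {K}
lemma mem_RM {M : ℕ} {x : K} : x ∈ RM K M ↔ ∃ k : ℕ, IsIntegral ℤ ((M : K) ^ k * x) := Iff.rfl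

lemma mem_RM_of_isIntegral {M : ℕ} {x : K} (h : IsIntegral ℤ x) : x ∈ RM K M := ⟨0, by simpa using h⟩

variable [NumberField K]

lemma fp_le_one_of_isIntegral (v : FinitePlace K) {x : K} (h : IsIntegral ℤ x) : v x ≤ 1 := by
  rw [← FinitePlace.norm_embedding_eq]
  exact FinitePlace.norm_le_one K v.maximalIdeal (⟨x, h⟩ : 𝓞 K)

lemma fp_le_one_iff (v : FinitePlace K) (x : K) : v x ≤ 1 ↔ v.maximalIdeal.valuation K x ≤ 1 := by
  rw [← FinitePlace.norm_embedding_eq, FinitePlace.norm_embedding']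
  rw [← WithZeroMulInt.toNNReal_le_one_iff (HeightOneSpectrum.one_lt_absNorm_nnreal v.maximalIdeal)]
  norm_cast

lemma isIntegral_of_fp (x : K) (h : ∀ v : FinitePlace K, v x ≤ 1) : IsIntegral ℤ x := by
  obtain ⟨y, rfl⟩ := IsDedekindDomain.HeightOneSpectrum.mem_integers_of_valuation_le_one (R := 𝓞 K) K x (by
    intro v
    have := (fp_le_one_iff (FinitePlace.mk v) x).1 (h _)
    rwa [FinitePlace.maximalIdeal_mk] at this)
  exact y.2

/-- the finite places dividing M -/
def TT (K : Type*) [Field K] [NumberField K] (M : ℕ) : Set (FinitePlace K) := {v | v (M : K) ≠ 1}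

lemma TT_finite {M : ℕ} (hM : M ≠ 0) : (TT K M).Finite :=
  FinitePlace.hasFiniteMulSupport (K := K) (x := (M : K)) (by exact_mod_cast hM)

lemma natCast_integral (M : ℕ) : IsIntegral ℤ (M : K) := by
  simpa using isIntegral_algebraMap (R := ℤ) (A := K) (x := (M : ℤ))

lemma fp_le_one_of_mem_RM {M : ℕ} (v : FinitePlace K) (hv : v ∉ TT K M) {x : K} (hx : x ∈ RM K M) :
    v x ≤ 1 := by
  obtain ⟨k, hk⟩ := hx
  have := fp_le_one_of_isIntegral v hk
  have h1 : v (M : K) = 1 := by simpa [TT] using hv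
  rwa [map_mul, map_pow, h1, one_pow, one_mul] at this

lemma mem_RM_of_fp {M : ℕ} (hM : M ≠ 0) (B : ℝ) : ∃ k : ℕ, ∀ x : K, (∀ v ∉ TT K M, v x ≤ 1) →
    (∀ v ∈ TT K M, v x ≤ B) → IsIntegral ℤ ((M : K) ^ k * x) := by
  have key : ∀ v ∈ TT K M, ∃ k : ℕ, ∀ l ≥ k, v (M : K) ^ l * B ≤ 1 := by
    intro v hv
    have h1 : v (M : K) < 1 := lt_of_le_of_ne (fp_le_one_of_isIntegral v (natCast_integral M)) hv
    have h2 := (tendsto_pow_atTop_nhds_zero_of_lt_one (apply_nonneg v _) h1).mul_const B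
    rw [zero_mul] at h2
    exact Filter.eventually_atTop.1 (h2.eventually_le_const zero_lt_one)
  choose! k hk using key
  refine ⟨∑ v ∈ (TT_finite (K := K) hM).toFinset, k v, fun x h1 h2 => isIntegral_of_fp _ fun v => ?_⟩
  rw [map_mul, map_pow]
  by_cases hv : v ∈ TT K M
  · refine le_trans ?_ (hk v hv (∑ v ∈ (TT_finite (K := K) hM).toFinset, k v) ?_)
    · exact mul_le_mul_of_nonneg_left (h2 v hv) (pow_nonneg (apply_nonneg v _) _)
    · exact single_le_sum (f := k) (fun _ _ => Nat.zero_le _) (by simpa using hv)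
  · have h3 : v (M : K) = 1 := by simpa [TT] using hv
    rw [h3, one_pow, one_mul]; exact h1 v hv

/-- the norm attached to an infinite place -/
noncomputable def infN (w : InfinitePlace K) : K →*₀ ℝ where
  toFun x := w x ^ w.mult
  map_zero' := by simp [w.mult_ne_zero]
  map_one' := by simp
  map_mul' x y := by simp [mul_pow]

lemma mult_le_two (w : InfinitePlace K) : w.mult ≤ 2 := by
  unfold InfinitePlace.mult; split_ifs <;> norm_num

lemma infN_add (w : InfinitePlace K) (x y : K) : infN w (x + y) ≤ 4 * max (infN w x) (infN w y) := by
  change w (x + y) ^ w.mult ≤ 4 * max (w x ^ w.mult) (w y ^ w.mult)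
  have h0 : ∀ x, 0 ≤ w x := fun x => apply_nonneg w x
  have h1 : w (x + y) ≤ 2 * max (w x) (w y) := by
    refine (w.1.add_le x y).trans ?_
    change w x + w y ≤ _
    linarith [le_max_left (w x) (w y), le_max_right (w x) (w y)]
  have h2 : (max (w x) (w y)) ^ w.mult = max (w x ^ w.mult) (w y ^ w.mult) := by
    rcases le_total (w x) (w y) with h | h
    · rw [max_eq_right h, max_eq_right (pow_le_pow_left₀ (h0 _) h _)]
    · rw [max_eq_left h, max_eq_left (pow_le_pow_left₀ (h0 _) h _)]
  calc w (x + y) ^ w.mult ≤ (2 * max (w x) (w y)) ^ w.mult := pow_le_pow_left₀ (h0 _) h1 _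
    _ = 2 ^ w.mult * max (w x ^ w.mult) (w y ^ w.mult) := by rw [mul_pow, h2]
    _ ≤ 2 ^ 2 * max (w x ^ w.mult) (w y ^ w.mult) := by
      refine mul_le_mul_of_nonneg_right ?_ (le_max_of_le_left (pow_nonneg (h0 _) _))
      exact pow_le_pow_right₀ (by norm_num) (mult_le_two w)
    _ = _ := by norm_num

lemma inf_int (w : InfinitePlace K) (m : ℤ) : w (m : K) = |(m : ℝ)| := by
  rw [← InfinitePlace.norm_embedding_eq w, map_intCast]
  simp

lemma infN_int (w : InfinitePlace K) (m : ℤ) (B : ℝ) (hB : 1 ≤ B) (h : |(m : ℝ)| ≤ B) :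
    infN w (m : K) ≤ B ^ 2 := by
  change w (m : K) ^ w.mult ≤ _
  rw [inf_int]
  exact (pow_le_pow_left₀ (abs_nonneg _) h _).trans (pow_le_pow_right₀ hB (mult_le_two w))

/-- the norm attached to a finite place -/
noncomputable def finN (w : FinitePlace K) : K →*₀ ℝ where
  toFun x := w x
  map_zero' := map_zero w
  map_one' := map_one w
  map_mul' x y := map_mul w x y

variable (K) in
/-- the places attached to a number field -/
noncomputable def plK (M : ℕ) (hM : M ≠ 0) [Fintype (TT K M)] :
    Pl K (InfinitePlace K ⊕ TT K M) where
  N := Sum.elim infN (fun v => finN v.1)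
  nonneg := by
    rintro (w | v) x
    · exact pow_nonneg (apply_nonneg w x) _
    · exact apply_nonneg v.1 x
  add := by
    rintro (w | v) x y
    · exact infN_add w x y
    · refine (FinitePlace.add_le v.1 x y).trans ?_
      have : 0 ≤ max (v.1 x) (v.1 y) := le_max_of_le_left (apply_nonneg v.1 x)
      change _ ≤ 4 * max (v.1 x) (v.1 y)
      linarith
  int := by
    rintro (w | v) m B hB h
    · exact infN_int w m B hB h
    · refine le_trans ?_ (one_le_pow₀ hB (n := 2))
      exact fp_le_one_of_isIntegral v.1 (by simpa using isIntegral_algebraMap (R := ℤ) (A := K) (x := m))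
  R := RM K M
  prod := by
    intro x hx h0
    rw [Fintype.prod_sum_type]
    have h1 := prod_abs_eq_one h0
    rw [← h1]
    refine mul_le_mul_of_nonneg_left ?_ (prod_nonneg fun w _ => pow_nonneg (apply_nonneg w x) _)
    have hs : (Function.mulSupport (fun w : FinitePlace K => w x)).Finite :=
      FinitePlace.hasFiniteMulSupport h0
    classical
    set T : Finset (FinitePlace K) := univ.map (Function.Embedding.subtype (· ∈ TT K M)) with hT
    have hmT : ∀ v, v ∉ T → v ∉ TT K M := fun v hv hv' => hv (by
      rw [hT, mem_map]; exact ⟨⟨v, hv'⟩, mem_univ _, rfl⟩)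
    have hsub : Function.mulSupport (fun w : FinitePlace K => w x) ⊆
        ((T ∪ Set.Finite.toFinset hs : Finset _) : Set (FinitePlace K)) := by
      intro v hv
      rw [coe_union]
      exact Or.inr (by rw [Finset.mem_coe, Set.Finite.mem_toFinset]; exact hv)
    rw [finprod_eq_prod_of_mulSupport_subset _ hsub]
    have h2 : ∏ v : TT K M, (Sum.elim infN (fun v : TT K M => finN v.1) (Sum.inr v)) x =
        ∏ v ∈ T, v x := by
      rw [hT, prod_map]; rfl
    rw [h2]
    refine Finset.prod_le_prod_of_subset_of_le_one subset_union_left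
      (fun v _ => apply_nonneg v x) (fun v _ hv => fp_le_one_of_mem_RM v (hmT v hv) hx)
  north := by
    intro B
    obtain ⟨k, hk⟩ := mem_RM_of_fp (K := K) hM B
    have hMk : (M : K) ^ k ≠ 0 := pow_ne_zero _ (by exact_mod_cast hM)
    have hfin := Embeddings.finite_of_norm_le K ℂ ((M : ℝ) ^ k * max 1 B)
    refine Set.Finite.of_finite_image (f := fun x => (M : K) ^ k * x) (hfin.subset ?_)
      (fun x _ y _ h => mul_left_cancel₀ hMk h)
    rintro _ ⟨x, ⟨hx, hb⟩, rfl⟩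
    refine ⟨hk x (fun v hv => fp_le_one_of_mem_RM v hv hx) (fun v hv => hb (Sum.inr ⟨v, hv⟩)), ?_⟩
    intro φ
    have h1 := hb (Sum.inl (InfinitePlace.mk φ))
    change (InfinitePlace.mk φ) x ^ (InfinitePlace.mk φ).mult ≤ B at h1
    have h2 : ‖φ x‖ ≤ max 1 B := by
      rw [InfinitePlace.apply] at h1
      by_contra hcon
      rw [not_le, max_lt_iff] at hcon
      have := le_self_pow₀ hcon.1.le (InfinitePlace.mult_ne_zero (w := InfinitePlace.mk φ))
      linarith [hcon.2]
    rw [map_mul, map_pow, norm_mul, norm_pow, map_natCast, Complex.norm_natCast]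
    gcongr

/-- `x` is an `M`-unit -/
def IsMU (M : ℕ) (x : K) : Prop := x ≠ 0 ∧ x ∈ RM K M ∧ x⁻¹ ∈ RM K M

theorem cube_finite (M : ℕ) (hM : M ≠ 0) (ω : K) (hω : ω ^ 2 + ω + 1 = 0) :
    {ξ : K | ξ ∈ RM K M ∧ ξ ≠ 0 ∧ IsMU M (1 - ξ ^ 3)}.Finite := by
  have : Fintype (TT K M) := (TT_finite hM).fintype
  refine ((plK K M hM).main ω hω).subset ?_
  rintro ξ ⟨h1, h2, h3, h4, h5⟩
  refine ⟨h1, h2, fun h => h3 (by rw [h, sub_self]), ?_⟩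
  have h6 := (plK K M hM).prod _ h5 (inv_ne_zero h3)
  have h7 := (plK K M hM).prod _ h4 h3
  simp only [map_inv₀, Finset.prod_inv_distrib] at h6
  exact (one_le_inv₀ (zero_lt_one.trans_le h7)).1 h6

/-- the group of `M`-units -/
def GM (K : Type*) [Field K] (M : ℕ) : Subgroup Kˣ where
  carrier := {u | (u : K) ∈ RM K M ∧ ((u⁻¹ : Kˣ) : K) ∈ RM K M}
  mul_mem' := by
    rintro x y ⟨hx, hx'⟩ ⟨hy, hy'⟩
    refine ⟨by simpa using mul_mem hx hy, ?_⟩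
    rw [mul_inv, Units.val_mul]
    exact mul_mem hx' hy'
  one_mem' := ⟨by simpa using one_mem _, by simpa using one_mem _⟩
  inv_mem' := by
    rintro x ⟨hx, hx'⟩
    exact ⟨hx', by simpa using hx⟩

lemma valuation_le_one_of_unit (v : FinitePlace K) (x : Kˣ)
    (h : v.maximalIdeal.valuationOfNeZero x = 1) : v (x : K) ≤ 1 := by
  rw [fp_le_one_iff, ← IsDedekindDomain.HeightOneSpectrum.valuationOfNeZero_eq, h]
  simp

/-- units into `M`-units -/
noncomputable def unitsToGM (M : ℕ) : (𝓞 K)ˣ →* GM K M :=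
  (Units.map (algebraMap (𝓞 K) K : 𝓞 K →* K)).codRestrict (GM K M) (by
    intro u
    refine ⟨mem_RM_of_isIntegral (u : 𝓞 K).2, ?_⟩
    rw [← map_inv]
    exact mem_RM_of_isIntegral ((u⁻¹ : (𝓞 K)ˣ) : 𝓞 K).2)

/-- valuations of `M`-units -/
noncomputable def valGM (M : ℕ) : Additive (GM K M) →+ (TT K M → ℤ) :=
  AddMonoidHom.mk' (fun x v => Multiplicative.toAdd
    (v.1.maximalIdeal.valuationOfNeZero ((x.toMul : GM K M) : Kˣ))) (by
      intro x y
      funext v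
      simp)

lemma range_eq_ker (M : ℕ) :
    LinearMap.range (MonoidHom.toAdditive (unitsToGM (K := K) M)).toIntLinearMap =
      LinearMap.ker (valGM (K := K) M).toIntLinearMap := by
  ext x
  constructor
  · rintro ⟨u, rfl⟩
    rw [LinearMap.mem_ker]
    funext v
    change Multiplicative.toAdd (v.1.maximalIdeal.valuationOfNeZero
      (Units.map (algebraMap (𝓞 K) K : 𝓞 K →* K) u.toMul)) = 0
    rw [IsDedekindDomain.HeightOneSpectrum.valuation_of_unit_eq]; rfl
  · intro hx
    rw [LinearMap.mem_ker] at hx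
    have hv : ∀ v ∈ TT K M, v.maximalIdeal.valuationOfNeZero ((x.toMul : GM K M) : Kˣ) = 1 := by
      intro v hv
      exact congrFun hx ⟨v, hv⟩
    have h1 : ∀ v : FinitePlace K, v (((x.toMul : GM K M) : Kˣ) : K) ≤ 1 := by
      intro v
      by_cases h : v ∈ TT K M
      · exact valuation_le_one_of_unit v _ (hv v h)
      · exact fp_le_one_of_mem_RM v h (x.toMul).2.1
    have h2 : ∀ v : FinitePlace K, v ((((x.toMul : GM K M) : Kˣ)⁻¹ : Kˣ) : K) ≤ 1 := by
      intro v
      by_cases h : v ∈ TT K M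
      · exact valuation_le_one_of_unit v _ (by rw [map_inv, hv v h, inv_one])
      · exact fp_le_one_of_mem_RM v h (x.toMul).2.2
    have i1 := isIntegral_of_fp _ h1
    have i2 := isIntegral_of_fp _ h2
    refine ⟨Additive.ofMul ⟨⟨_, i1⟩, ⟨_, i2⟩, ?_, ?_⟩, ?_⟩
    · apply RingOfIntegers.ext; exact Units.mul_inv _
    · apply RingOfIntegers.ext; exact Units.inv_mul _
    · apply Additive.toMul.injective
      apply Subtype.ext
      apply Units.ext
      rfl

lemma GM_finite (M : ℕ) (hM : M ≠ 0) : Module.Finite ℤ (Additive (GM K M)) := by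
  have : Finite (TT K M) := TT_finite hM
  have := isNoetherian_of_range_eq_ker _ _ (range_eq_ker (K := K) M)
  infer_instance

lemma cube_reps (M : ℕ) (hM : M ≠ 0) : ∃ A : Finset K, (∀ a ∈ A, IsMU M a) ∧
    ∀ x : K, IsMU M x → ∃ a ∈ A, ∃ b, IsMU M b ∧ x = a * b ^ 3 := by
  classical
  have := GM_finite (K := K) M hM
  set G := Additive (GM K M)
  set H : Submodule ℤ G := LinearMap.range (LinearMap.lsmul ℤ G 3) with hH
  have htor : Module.IsTorsion ℤ (G ⧸ H) := by
    intro x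
    refine ⟨⟨3, by simp⟩, ?_⟩
    induction x using Submodule.Quotient.induction_on with
    | H x =>
      change (3 : ℤ) • (Submodule.Quotient.mk x : G ⧸ H) = _
      rw [← Submodule.Quotient.mk_smul, Submodule.Quotient.mk_eq_zero]
      exact ⟨x, rfl⟩
  have hfin : Finite (G ⧸ H) := Module.finite_of_fg_torsion _ htor
  have := Fintype.ofFinite (G ⧸ H)
  refine ⟨univ.image fun q : G ⧸ H => (((Quotient.out q : G).toMul : Kˣ) : K), ?_, ?_⟩
  · intro a ha
    rw [mem_image] at ha
    obtain ⟨q, -, rfl⟩ := ha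
    refine ⟨Units.ne_zero _, (Quotient.out q : G).toMul.2.1, ?_⟩
    have := (Quotient.out q : G).toMul.2.2
    simpa using this
  · rintro x ⟨h0, h1, h2⟩
    let y : G := Additive.ofMul ⟨Units.mk0 x h0, h1, by simpa using h2⟩
    refine ⟨_, mem_image_of_mem _ (mem_univ (Submodule.Quotient.mk y : G ⧸ H)), ?_⟩
    set r : G := Quotient.out (Submodule.Quotient.mk y : G ⧸ H) with hr
    have hq : (Submodule.Quotient.mk y : G ⧸ H) = Submodule.Quotient.mk r := (Quotient.out_eq _).symm
    rw [Submodule.Quotient.eq] at hq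
    obtain ⟨b, hb⟩ := hq
    change (3 : ℤ) • b = y - r at hb
    refine ⟨((b.toMul : Kˣ) : K), ⟨Units.ne_zero _, b.toMul.2.1, by simpa using b.toMul.2.2⟩, ?_⟩
    have hb' : y = r + (3 : ℕ) • b := by
      have : (3 : ℕ) • b = (3 : ℤ) • b := by norm_cast
      rw [this, hb]; abel
    have := congrArg (fun z : G => ((z.toMul : Kˣ) : K)) hb'
    change x = (((r.toMul * b.toMul ^ 3 : GM K M) : Kˣ) : K) at this
    simpa using this



omit [NumberField K] in
lemma RM_map {L : Type*} [Field L] [Algebra K L] {M : ℕ} {x : K} (hx : x ∈ RM K M) :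
    algebraMap K L x ∈ RM L M := by
  obtain ⟨k, hk⟩ := hx
  refine ⟨k, ?_⟩
  have := hk.map (algebraMap K L).toIntAlgHom
  simpa using this

omit [NumberField K] in
lemma IsMU_map {L : Type*} [Field L] [Algebra K L] {M : ℕ} {x : K} (hx : IsMU M x) :
    IsMU M (algebraMap K L x) :=
  ⟨by simpa using hx.1, RM_map hx.2.1, by rw [← map_inv₀]; exact RM_map hx.2.2⟩

omit [NumberField K] in
lemma RM_of_pow {M : ℕ} {c : K} {n : ℕ} (hn : n ≠ 0) (h : c ^ n ∈ RM K M) : c ∈ RM K M := by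
  obtain ⟨k, hk⟩ := h
  refine ⟨k, ?_⟩
  have hM : IsIntegral ℤ (M : K) := by
    simpa using isIntegral_algebraMap (R := ℤ) (A := K) (x := (M : ℤ))
  apply IsIntegral.of_pow (Nat.pos_of_ne_zero hn)
  have := (hM.pow (k * (n - 1))).mul hk
  convert! this using 1
  obtain ⟨m, rfl⟩ := Nat.exists_eq_succ_of_ne_zero hn
  simp only [Nat.succ_eq_add_one, Nat.add_sub_cancel]
  ring

theorem unit_eq (M : ℕ) (hM : M ≠ 0) : {x : K | IsMU M x ∧ IsMU M (1 - x)}.Finite := by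
  classical
  obtain ⟨A, hA, hrep⟩ := cube_reps (K := K) M hM
  let Ω := AlgebraicClosure K
  choose c hc using fun a : K => IsAlgClosed.exists_pow_nat_eq (algebraMap K Ω a) (n := 3) (by norm_num)
  obtain ⟨ω, hω⟩ : ∃ ω : Ω, ω ^ 2 + ω + 1 = 0 := by
    obtain ⟨s, hs⟩ := IsAlgClosed.exists_pow_nat_eq (-3 : Ω) (n := 2) (by norm_num)
    have : CharZero Ω := algebraRat.charZero Ω
    refine ⟨(s - 1) / 2, ?_⟩
    linear_combination (1 / 4) * hs
  let T : Set Ω := ((insert ω (A.image c) : Finset Ω) : Set Ω)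
  let L := IntermediateField.adjoin K T
  have : Finite T := Finset.finite_toSet _
  have hfd : FiniteDimensional K L := IntermediateField.finiteDimensional_adjoin
    (fun x _ => Algebra.IsIntegral.isIntegral x)
  have hnf : NumberField L := NumberField.of_module_finite K L
  have hωL : ω ∈ L := IntermediateField.subset_adjoin _ _ (by simp [T])
  have hcL : ∀ a ∈ A, c a ∈ L := fun a ha => IntermediateField.subset_adjoin _ _ (by
    simp only [T, coe_insert, coe_image]
    exact Or.inr ⟨a, ha, rfl⟩)
  have hfin := cube_finite (K := L) M hM ⟨ω, hωL⟩ (by apply Subtype.ext; exact hω)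
  refine Set.Finite.of_finite_image (f := algebraMap K L) ((hfin.image (fun ξ => ξ ^ 3)).subset ?_)
    (FaithfulSMul.algebraMap_injective K L).injOn
  rintro _ ⟨x, ⟨hx, hx1⟩, rfl⟩
  obtain ⟨a, ha, b, hb, rfl⟩ := hrep x hx
  have hca : (⟨c a, hcL a ha⟩ : L) ^ 3 = algebraMap K L a := by
    apply Subtype.ext; exact hc a
  have e : ((⟨c a, hcL a ha⟩ : L) * algebraMap K L b) ^ 3 = algebraMap K L (a * b ^ 3) := by
    rw [mul_pow, hca, map_mul, map_pow]
  refine ⟨⟨c a, hcL a ha⟩ * algebraMap K L b, ⟨?_, ?_, ?_⟩, e⟩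
  · refine mul_mem (RM_of_pow (n := 3) (by norm_num) ?_) (RM_map hb.2.1)
    rw [hca]; exact RM_map (hA a ha).2.1
  · intro h0
    rw [h0, zero_pow (by norm_num)] at e
    exact hx.1 ((map_eq_zero _).1 e.symm)
  · rw [e, ← map_one (algebraMap K L), ← map_sub]
    exact IsMU_map hx1
end nf
end SUnitAux

/-! ### Part 4: the deduction -/
namespace SUnitAux
section final
variable {K : Type*} [Field K]

lemma IsMU.mul {M : ℕ} {x y : K} (hx : IsMU M x) (hy : IsMU M y) : IsMU M (x * y) :=
  ⟨mul_ne_zero hx.1 hy.1, mul_mem hx.2.1 hy.2.1, by rw [mul_inv]; exact mul_mem hx.2.2 hy.2.2⟩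

lemma IsMU.inv {M : ℕ} {x : K} (hx : IsMU M x) : IsMU M x⁻¹ :=
  ⟨inv_ne_zero hx.1, hx.2.2, by rw [inv_inv]; exact hx.2.1⟩

lemma IsMU.neg {M : ℕ} {x : K} (hx : IsMU M x) : IsMU M (-x) :=
  ⟨neg_ne_zero.2 hx.1, neg_mem hx.2.1, by rw [inv_neg]; exact neg_mem hx.2.2⟩

lemma IsMU.one {M : ℕ} : IsMU M (1 : K) := ⟨one_ne_zero, one_mem _, by rw [inv_one]; exact one_mem _⟩

lemma IsMU.of_sq {M : ℕ} {x s : K} (hx : IsMU M x) (h : s ^ 2 = x) : IsMU M s := by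
  refine ⟨?_, RM_of_pow (n := 2) (by norm_num) (h ▸ hx.2.1),
    RM_of_pow (n := 2) (by norm_num) (by rw [inv_pow, h]; exact hx.2.2)⟩
  rintro rfl
  exact hx.1 (by rw [← h]; simp)

lemma IsMU.of_dvd [CharZero K] {M : ℕ} (hM : M ≠ 0) {p : ℕ} (h : p ∣ M) : IsMU M (p : K) := by
  have hp : (p : K) ≠ 0 := by
    rintro h0
    have : p = 0 := by exact_mod_cast h0
    subst this
    exact hM (zero_dvd_iff.1 h)
  refine ⟨hp, natCast_mem _ _, 1, ?_⟩
  obtain ⟨c, rfl⟩ := h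
  have : ((p * c : ℕ) : K) ^ 1 * (p : K)⁻¹ = ((c : ℤ) : K) := by
    push_cast; field_simp
  rw [this]
  exact isIntegral_algebraMap (R := ℤ) (A := K) (x := (c : ℤ))

lemma nat_good (S : Finset ℕ) (P : K → Prop) (h1 : P 1) (hmul : ∀ x y, P x → P y → P (x * y))
    (hp : ∀ p ∈ S, P (p : K)) (n : ℕ) (hn : n ≠ 0)
    (h : ∀ p : ℕ, p.Prime → p ∣ n → p ∈ S) : P (n : K) := by
  induction n using induction_on_primes with
  | zero => exact absurd rfl hn
  | one => simpa using h1
  | prime_mul p n hpp ih =>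
    rw [Nat.cast_mul]
    refine hmul _ _ (hp p (h p hpp (dvd_mul_right _ _))) (ih (fun h0 => hn (by rw [h0, mul_zero])) ?_)
    exact fun q hq hqn => h q hq (hqn.mul_left _)

lemma int_good (S : Finset ℕ) (P : K → Prop) (h1 : P 1) (hneg : P (-1))
    (hmul : ∀ x y, P x → P y → P (x * y)) (hp : ∀ p ∈ S, P (p : K)) (x : ℤ) (hx : IsSUnit S x) :
    P (x : K) := by
  have h := nat_good S P h1 hmul hp x.natAbs (Int.natAbs_ne_zero.2 hx.1)
    (fun p hpp hd => hx.2 p hpp (Int.natCast_dvd.2 hd))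
  rcases Int.natAbs_eq x with e | e
  · rw [e]; simpa using h
  · rw [e]
    have := hmul _ _ hneg h
    simpa using this

/-- ratios take finitely many values -/
lemma ratio_finite (S : Finset ℕ) (hS : ∀ p ∈ S, p.Prime) :
    {q : ℚ | ∃ x y w z : ℤ, IsSUnit S x ∧ IsSUnit S y ∧ IsSUnit S w ∧ x + y = w * z ^ 2 ∧
      q = (y : ℚ) / x}.Finite := by
  classical
  choose r hr using fun p : ℕ => IsAlgClosed.exists_pow_nat_eq (p : ℂ) (n := 2) (by norm_num)
  let T : Set ℂ := ((insert Complex.I (S.image r) : Finset ℂ) : Set ℂ)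
  let L := IntermediateField.adjoin ℚ T
  have : Finite T := Finset.finite_toSet _
  have hhInt : ∀ x ∈ T, IsIntegral ℚ x := by
    intro x hx
    simp only [T, Finset.coe_insert, Finset.coe_image] at hx
    apply IsIntegral.of_pow (n := 2) (by norm_num)
    rcases hx with rfl | ⟨p, -, rfl⟩
    · rw [Complex.I_sq]; exact isIntegral_one.neg
    · rw [hr]; simpa using isIntegral_algebraMap (R := ℚ) (A := ℂ) (x := (p : ℚ))
  have hfd : FiniteDimensional ℚ L := IntermediateField.finiteDimensional_adjoin hhInt
  have hnf : NumberField L := NumberField.of_module_finite ℚ L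
  have hIL : Complex.I ∈ L := IntermediateField.subset_adjoin _ _ (by simp [T])
  have hrL : ∀ p ∈ S, r p ∈ L := fun a ha => IntermediateField.subset_adjoin _ _ (by
    simp only [T, Finset.coe_insert, Finset.coe_image]
    exact Or.inr ⟨a, ha, rfl⟩)
  set M : ℕ := 2 * ∏ p ∈ S, p with hMdef
  have hM : M ≠ 0 := mul_ne_zero two_ne_zero (Finset.prod_ne_zero_iff.2 fun p hp => (hS p hp).ne_zero)
  have hsq : ∀ x : ℤ, IsSUnit S x → ∃ s : L, s ^ 2 = (x : L) := by
    intro x hx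
    refine int_good S (fun y : L => ∃ s : L, s ^ 2 = y) ⟨1, one_pow _⟩ ⟨⟨Complex.I, hIL⟩, ?_⟩ ?_ ?_ x hx
    · apply Subtype.ext; simp
    · rintro _ _ ⟨s, rfl⟩ ⟨t, rfl⟩; exact ⟨s * t, mul_pow _ _ _⟩
    · intro p hp
      refine ⟨⟨r p, hrL p hp⟩, ?_⟩
      apply Subtype.ext; simpa using hr p
  have hMU : ∀ x : ℤ, IsSUnit S x → IsMU M (x : L) := by
    intro x hx
    refine int_good S (IsMU M) IsMU.one IsMU.one.neg (fun _ _ => IsMU.mul) ?_ x hx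
    intro p hp
    exact IsMU.of_dvd hM ((Finset.dvd_prod_of_mem _ hp).mul_left 2)
  have h2 : IsMU M (2 : L) := by exact_mod_cast IsMU.of_dvd (K := L) (p := 2) hM (dvd_mul_right _ _)
  have hfin := unit_eq (K := L) M hM
  refine Set.Finite.of_finite_image (f := fun q : ℚ => (q : L))
    ((hfin.image (fun u => 4 * (u * (u - 1)))).subset ?_) (Rat.cast_injective.injOn)
  rintro _ ⟨_, ⟨x, y, w, z, hx, hy, hw, he, rfl⟩, rfl⟩
  obtain ⟨s, hs⟩ := hsq x hx
  obtain ⟨t, ht⟩ := hsq w hw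
  have hsU := (hMU x hx).of_sq hs
  have htU := (hMU w hw).of_sq ht
  have he' : (x : L) + y = w * z ^ 2 := by exact_mod_cast congrArg (fun n : ℤ => (n : L)) he
  have hzR : (z : L) ∈ RM L M := intCast_mem _ _
  set α : L := t * z + s with hα
  set β : L := t * z - s with hβ
  have hαR : α ∈ RM L M := add_mem (mul_mem htU.2.1 hzR) hsU.2.1
  have hβR : β ∈ RM L M := sub_mem (mul_mem htU.2.1 hzR) hsU.2.1
  have hαβ : α * β = y := by rw [hα, hβ]; linear_combination (z : L) ^ 2 * ht - hs - he'
  have hyU := hMU y hy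
  have hα0 : α ≠ 0 := fun h => hyU.1 (by rw [← hαβ, h, zero_mul])
  have hβ0 : β ≠ 0 := fun h => hyU.1 (by rw [← hαβ, h, mul_zero])
  have hαU : IsMU M α := ⟨hα0, hαR, by
    have : α⁻¹ = β * (y : L)⁻¹ := by rw [← hαβ]; field_simp
    rw [this]; exact mul_mem hβR hyU.2.2⟩
  have hβU : IsMU M β := ⟨hβ0, hβR, by
    have : β⁻¹ = α * (y : L)⁻¹ := by rw [← hαβ]; field_simp
    rw [this]; exact mul_mem hαR hyU.2.2⟩
  have hs0 := hsU.1
  have e1 : 1 - α * (2 * s)⁻¹ = -(β * (2 * s)⁻¹) := by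
    rw [hα, hβ]; field_simp; ring
  refine ⟨α * (2 * s)⁻¹, ⟨hαU.mul (h2.mul hsU).inv, ?_⟩, ?_⟩
  · rw [e1]; exact (hβU.mul (h2.mul hsU).inv).neg
  · have e2 : α * (2 * s)⁻¹ - 1 = β * (2 * s)⁻¹ := by linear_combination -e1
    simp only [e2]
    push_cast
    rw [← hαβ, ← hs]
    field_simp
    norm_num
end final
end SUnitAux

theorem finitely_many_sums_of_S_units_square
    (S : Finset ℕ) (hS : ∀ p ∈ S, p.Prime) (a : ℕ) (ha : 0 < a) :
    {t : ℤ × ℤ × ℤ | IsSUnit S t.1 ∧ IsSUnit S t.2.1 ∧ IsSUnit S t.2.2 ∧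
      Int.gcd t.1 t.2.1 ≤ a ∧ ∃ z : ℤ, z ≠ 0 ∧ t.1 + t.2.1 = t.2.2 * z ^ 2}.Finite := by
  have hfin := SUnitAux.ratio_finite S hS
  obtain ⟨B, hB⟩ := (hfin.image (fun q : ℚ => q.den + q.num.natAbs)).bddAbove
  have hbox : (Set.Icc (-(2 * (a * B) : ℤ)) (2 * (a * B)) ×ˢ
      (Set.Icc (-(2 * (a * B) : ℤ)) (2 * (a * B)) ×ˢ
        Set.Icc (-(2 * (a * B) : ℤ)) (2 * (a * B)))).Finite :=
    (Set.finite_Icc _ _).prod ((Set.finite_Icc _ _).prod (Set.finite_Icc _ _))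
  refine hbox.subset ?_
  rintro ⟨x, y, w⟩ ⟨hx, hy, hw, hg, z, hz, he⟩
  simp only at hx hy hw hg he
  set q : ℚ := (y : ℚ) / x with hq
  have hqB : q.den + q.num.natAbs ≤ B := hB ⟨q, ⟨x, y, w, z, hx, hy, hw, he, hq⟩, rfl⟩
  have hx0 : (x : ℚ) ≠ 0 := by exact_mod_cast hx.1
  have hcross : x * q.num = y * q.den := by
    have h1 : (q.num : ℚ) / q.den = y / x := by rw [Rat.num_div_den, hq]
    have hd : (q.den : ℚ) ≠ 0 := by exact_mod_cast q.den_nz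
    rw [div_eq_div_iff hd hx0] at h1
    have : (q.num : ℤ) * x = y * q.den := by exact_mod_cast h1
    linarith
  have hq0 : q.num ≠ 0 := by
    intro h
    rw [h, mul_zero] at hcross
    rcases mul_eq_zero.1 hcross.symm with h | h
    · exact hy.1 h
    · exact q.den_nz (by exact_mod_cast h)
  have dx : x.natAbs ∣ Int.gcd x y * q.den := by
    have h1 : x.natAbs ∣ x.natAbs * q.den := dvd_mul_right _ _
    have h2 : x.natAbs ∣ y.natAbs * q.den := by
      have := congrArg Int.natAbs hcross
      rw [Int.natAbs_mul, Int.natAbs_mul, Int.natAbs_natCast] at this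
      rw [← this]; exact dvd_mul_right _ _
    have := Nat.dvd_gcd h1 h2
    rwa [Nat.gcd_mul_right] at this
  have dy : y.natAbs ∣ Int.gcd x y * q.num.natAbs := by
    have h1 : y.natAbs ∣ y.natAbs * q.num.natAbs := dvd_mul_right _ _
    have h2 : y.natAbs ∣ x.natAbs * q.num.natAbs := by
      have := congrArg Int.natAbs hcross
      rw [Int.natAbs_mul, Int.natAbs_mul, Int.natAbs_natCast] at this
      rw [this]; exact dvd_mul_right _ _
    have := Nat.dvd_gcd h2 h1
    rwa [Nat.gcd_mul_right] at this
  have hgpos : 0 < Int.gcd x y := Int.gcd_pos_of_ne_zero_left _ hx.1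
  have bx : x.natAbs ≤ a * B := (Nat.le_of_dvd (Nat.mul_pos hgpos q.den_pos) dx).trans
    (Nat.mul_le_mul hg (by omega))
  have bY : y.natAbs ≤ a * B :=
    (Nat.le_of_dvd (Nat.mul_pos hgpos (Int.natAbs_pos.2 hq0)) dy).trans (Nat.mul_le_mul hg (by omega))
  have hne : x + y ≠ 0 := by rw [he]; exact mul_ne_zero hw.1 (pow_ne_zero _ hz)
  have bw : w.natAbs ≤ (x + y).natAbs :=
    Nat.le_of_dvd (Int.natAbs_pos.2 hne) (Int.natAbs_dvd_natAbs.2 ⟨z ^ 2, he⟩)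
  have bx' : (x.natAbs : ℤ) ≤ a * B := by exact_mod_cast bx
  have by' : (y.natAbs : ℤ) ≤ a * B := by exact_mod_cast bY
  have bw' : (w.natAbs : ℤ) ≤ (x + y).natAbs := by exact_mod_cast bw
  refine ⟨⟨?_, ?_⟩, ⟨?_, ?_⟩, ⟨?_, ?_⟩⟩ <;> simp only <;> omega
end

section
/- Let S be a finite set of prime numbers and let a be a positive integer. There exists a constant C, depending only on S and a, such that whenever x and y are S-units with gcd(x, y) ≤ a and x + y is again an S-unit, one has max(|x|, |y|) ≤ C. -/
open intervalIntegral in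
theorem beta_nat (n : ℕ) : ∀ m : ℕ,
    ((m + n + 1).factorial : ℝ) * ∫ u in (0:ℝ)..1, u ^ m * (1 - u) ^ n = m.factorial * n.factorial := by
  induction n with
  | zero =>
    intro m
    simp only [pow_zero, mul_one, integral_pow, add_zero, Nat.factorial_succ]
    push_cast
    have : (m : ℝ) + 1 ≠ 0 := by positivity
    simp
    field_simp
  | succ n ih =>
    intro m
    have h := ih (m + 1)
    have key : ∫ u in (0:ℝ)..1, ((m + 1 : ℝ) * (u ^ m * (1 - u) ^ (n + 1))
        - (n + 1 : ℝ) * (u ^ (m + 1) * (1 - u) ^ n)) = 0 := by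
      have := integral_eq_sub_of_hasDerivAt (a := 0) (b := 1)
        (f := fun u : ℝ => u ^ (m + 1) * (1 - u) ^ (n + 1))
        (f' := fun u : ℝ => ((m + 1 : ℝ) * (u ^ m * (1 - u) ^ (n + 1))
        - (n + 1 : ℝ) * (u ^ (m + 1) * (1 - u) ^ n))) ?_ ?_
      · rw [this]; simp
      · intro u _
        have h1 := (hasDerivAt_pow (m + 1) u).mul (((hasDerivAt_id u).const_sub 1).pow (n + 1))
        refine h1.congr_deriv ?_
        simp
        ring
      · apply Continuous.intervalIntegrable; fun_prop
    rw [integral_sub (by apply Continuous.intervalIntegrable; fun_prop)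
      (by apply Continuous.intervalIntegrable; fun_prop), integral_const_mul,
      integral_const_mul] at key
    have e : m + 1 + n + 1 = m + (n + 1) + 1 := by ring
    rw [e] at h
    have hm : (m : ℝ) + 1 ≠ 0 := by positivity
    apply mul_left_cancel₀ hm
    rw [Nat.factorial_succ n]
    rw [Nat.factorial_succ m] at h
    push_cast at h ⊢
    linear_combination ((m + (n + 1) + 1).factorial : ℝ) * key + (n + 1 : ℝ) * h

def padeMult (i j k : ℕ) : ℕ := (i + j + k + 1).choose k * (i + j + 1).choose i * (j + 1)

theorem padeMult_spec (i j k : ℕ) :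
    padeMult i j k * (i.factorial * j.factorial * k.factorial) = (i + j + k + 1).factorial := by
  have h1 := Nat.add_choose_mul_factorial_mul_factorial (i + j + 1) k
  have h2 := Nat.add_choose_mul_factorial_mul_factorial i (j + 1)
  have e : i + j + 1 + k = i + j + k + 1 := by ring
  have h2' : (i + j + 1).choose i = (i + j + 1).choose (j + 1) :=
    Nat.choose_symm_of_eq_add (by ring)
  rw [Nat.factorial_succ j, ← add_assoc, ← h2'] at h2
  rw [← h2, e] at h1
  rw [← h1, padeMult]; ring

theorem padeMult_pos (i j k : ℕ) : 0 < padeMult i j k := by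
  unfold padeMult
  have := Nat.choose_pos (n := i + j + k + 1) (k := k) (by omega)
  have := Nat.choose_pos (n := i + j + 1) (k := i) (by omega)
  positivity

theorem padeMult_le (i j k N : ℕ) (h : i + j + k + 1 = 3 * N) : padeMult i j k ≤ 512 ^ N := by
  have h1 : (i + j + k + 1).choose k ≤ 8 ^ N := by
    rw [h]; refine (Nat.choose_le_two_pow _ _).trans ?_
    rw [pow_mul]; norm_num
  have h2 : (i + j + 1).choose i ≤ 8 ^ N := by
    refine (Nat.choose_le_two_pow _ _).trans ?_
    rw [show (8:ℕ) = 2 ^ 3 by norm_num, ← pow_mul]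
    exact Nat.pow_le_pow_right (by norm_num) (by omega)
  have h3 : j + 1 ≤ 8 ^ N := by
    rw [show (8:ℕ) = 2 ^ 3 by norm_num, ← pow_mul]
    exact le_trans (by omega) (Nat.lt_two_pow_self (n := 3 * N)).le
  calc padeMult i j k ≤ 8 ^ N * 8 ^ N * 8 ^ N := by unfold padeMult; gcongr
    _ = 512 ^ N := by rw [← mul_pow, ← mul_pow]; norm_num

/-- permutation invariance -/
theorem padeMult_perm (i j k i' j' k' : ℕ)
    (h : i.factorial * j.factorial * k.factorial = i'.factorial * j'.factorial * k'.factorial)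
    (h' : i + j + k = i' + j' + k') : padeMult i j k = padeMult i' j' k' := by
  have h1 := padeMult_spec i j k
  have h2 := padeMult_spec i' j' k'
  rw [h, h', ← h2] at h1
  exact Nat.eq_of_mul_eq_mul_right (by positivity) h1

noncomputable def padeJ (i j k : ℕ) (p q : ℤ) : ℝ :=
  ∫ u in (0:ℝ)..1, u ^ i * (1 - u) ^ j * (p * u + q) ^ k

open intervalIntegral in
theorem padeJ_int (i j k : ℕ) (p q : ℤ) : ∃ n : ℤ, (n : ℝ) = padeMult i j k * padeJ i j k p q := by
  refine ⟨∑ l ∈ Finset.range (k + 1),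
    ((i + l).choose l * (i + j + k + 1).choose (k - l) : ℤ) * p ^ l * q ^ (k - l), ?_⟩
  have h1 : padeJ i j k p q = ∑ l ∈ Finset.range (k + 1),
      (p : ℝ) ^ l * q ^ (k - l) * k.choose l * ∫ u in (0:ℝ)..1, u ^ (i + l) * (1 - u) ^ j := by
    unfold padeJ
    simp_rw [← integral_const_mul]
    rw [← integral_finsetSum]
    · congr 1; ext u
      rw [add_pow, Finset.mul_sum]
      refine Finset.sum_congr rfl fun l _ => ?_
      rw [mul_pow]; ring
    · intro l _
      apply Continuous.intervalIntegrable; fun_prop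
  rw [h1, Finset.mul_sum]
  push_cast
  refine Finset.sum_congr rfl fun l hl => ?_
  have hl : l ≤ k := by simpa [Nat.lt_succ_iff] using hl
  obtain ⟨r, rfl⟩ := Nat.exists_eq_add_of_le hl
  have hb := beta_nat j (i + l)
  have hs := padeMult_spec i j (l + r)
  have c1 := Nat.add_choose_mul_factorial_mul_factorial i l
  have c2 := Nat.add_choose_mul_factorial_mul_factorial (i + l + j + 1) r
  have c3 := Nat.add_choose_mul_factorial_mul_factorial l r
  have c3' : (l + r).choose l = (l + r).choose r := Nat.choose_symm_of_eq_add (by ring)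
  rw [← c3'] at c3
  have e : i + l + j + 1 + r = i + j + (l + r) + 1 := by ring
  rw [e] at c2
  rw [Nat.add_sub_cancel_left]
  set B := ∫ u in (0:ℝ)..1, u ^ (i + l) * (1 - u) ^ j
  have key : ((i + l).choose l : ℝ) * (i + j + (l + r) + 1).choose r
      = padeMult i j (l + r) * (l + r).choose l * B := by
    have f1 : (0:ℝ) < i.factorial := by positivity
    have f2 : (0:ℝ) < j.factorial := by positivity
    have f3 : (0:ℝ) < l.factorial := by positivity
    have f4 : (0:ℝ) < r.factorial := by positivity
    have f5 : (0:ℝ) < (i + l + j + 1).factorial := by positivity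
    have hs' : (padeMult i j (l + r) : ℝ) * (i.factorial * j.factorial * (l + r).factorial) = (i + j + (l + r) + 1).factorial := by exact_mod_cast hs
    have c1r : ((i + l).choose l : ℝ) * i.factorial * l.factorial = (i + l).factorial := by exact_mod_cast c1
    have c2r : ((i + j + (l + r) + 1).choose r : ℝ) * (i + l + j + 1).factorial * r.factorial = (i + j + (l + r) + 1).factorial := by exact_mod_cast c2
    have c3r : ((l + r).choose l : ℝ) * l.factorial * r.factorial = (l + r).factorial := by exact_mod_cast c3
    have : (0:ℝ) < i.factorial * j.factorial * l.factorial * r.factorial * (i + l + j + 1).factorial := by positivity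
    apply mul_left_cancel₀ this.ne'
    calc _ = (((i + l).choose l : ℝ) * i.factorial * l.factorial) * (((i + j + (l + r) + 1).choose r : ℝ) * (i + l + j + 1).factorial * r.factorial) * j.factorial := by ring
      _ = ((i+l).factorial * j.factorial) * ((padeMult i j (l + r) : ℝ) * (i.factorial * j.factorial * (l + r).factorial)) := by rw [c1r, c2r, hs']; ring
      _ = _ := by rw [← hb, ← c3r]; ring
  linear_combination (p : ℝ) ^ l * q ^ r * key

open intervalIntegral in
theorem padeJ_bound (i j k : ℕ) (p q : ℤ) (Z : ℝ)
    (h : ∀ u : ℝ, 0 ≤ u → u ≤ 1 → |p * u + q| ≤ Z) : |padeJ i j k p q| ≤ Z ^ k := by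
  have := norm_integral_le_of_norm_le_const (a := (0:ℝ)) (b := 1) (C := Z ^ k)
    (f := fun u => u ^ i * (1 - u) ^ j * (p * u + q) ^ k) ?_
  · simpa [padeJ] using this
  · intro u hu
    rw [Set.uIoc_of_le zero_le_one] at hu
    have h0 := hu.1.le
    have h1 := hu.2
    rw [norm_mul, norm_mul, norm_pow, norm_pow, norm_pow, Real.norm_eq_abs, Real.norm_eq_abs,
      Real.norm_eq_abs, abs_of_nonneg h0, abs_of_nonneg (by linarith : (0:ℝ) ≤ 1 - u)]
    have a1 : u ^ i ≤ 1 := pow_le_one₀ h0 h1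
    have a2 : (1 - u) ^ j ≤ 1 := pow_le_one₀ (by linarith) (by linarith)
    have a3 : |p * u + q| ^ k ≤ Z ^ k := by gcongr; exact h u h0 h1
    have a4 : 0 ≤ (1 - u) ^ j := pow_nonneg (by linarith) _
    calc _ ≤ 1 * 1 * Z ^ k := by gcongr
      _ = _ := by ring

/-- the integrand -/
noncomputable def padeF (i j k : ℕ) (x z : ℤ) (s : ℝ) : ℝ := s ^ i * (s - x) ^ j * (s - z) ^ k

theorem padeF_int (i j k : ℕ) (x z : ℤ) (a b : ℝ) :
    IntervalIntegrable (padeF i j k x z) MeasureTheory.volume a b := by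
  unfold padeF
  apply Continuous.intervalIntegrable; fun_prop

open intervalIntegral in
theorem subst_lin (f : ℝ → ℝ) (a b : ℝ) :
    ∫ s in a..b, f s = (b - a) * ∫ u in (0:ℝ)..1, f ((b - a) * u + a) := by
  have := mul_integral_comp_mul_add (f := f) (a := 0) (b := 1) (b - a) a
  rw [this]; simp

open intervalIntegral in
theorem padeF_1 (i j k : ℕ) (x z : ℤ) :
    ∫ s in (0:ℝ)..x, padeF i j k x z s = x ^ (i + j + 1) * ((-1) ^ j * padeJ i j k x (-z)) := by
  rw [subst_lin, padeJ, ← integral_const_mul, ← integral_const_mul, ← integral_const_mul]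
  congr 1; ext u
  rw [padeF, show ((x:ℝ) - 0) * u + 0 - x = x * ((-1) * (1 - u)) by ring, mul_pow (x:ℝ), mul_pow (-1:ℝ)]
  push_cast
  rw [add_zero, sub_zero, mul_pow, ← sub_eq_add_neg]
  ring

open intervalIntegral in
theorem padeF_2 (i j k : ℕ) (x z : ℤ) :
    ∫ s in (x:ℝ)..z, padeF i j k x z s
      = (z - x : ℝ) ^ (j + k + 1) * ((-1) ^ k * padeJ j k i (z - x) x) := by
  rw [subst_lin, padeJ, ← integral_const_mul, ← integral_const_mul, ← integral_const_mul]
  congr 1; ext u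
  rw [padeF, show ((z:ℝ) - x) * u + x - z = (z - x) * ((-1) * (1 - u)) by ring,
    show ((z:ℝ) - x) * u + x - x = (z - x) * u by ring, mul_pow ((z:ℝ) - x), mul_pow ((z:ℝ) - x), mul_pow (-1:ℝ)]
  push_cast
  ring

open intervalIntegral in
theorem padeF_3 (i j k : ℕ) (x z : ℤ) :
    ∫ s in (0:ℝ)..z, padeF i j k x z s = z ^ (i + k + 1) * ((-1) ^ k * padeJ i k j z (-x)) := by
  rw [subst_lin, padeJ, ← integral_const_mul, ← integral_const_mul, ← integral_const_mul]
  congr 1; ext u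
  rw [padeF, show ((z:ℝ) - 0) * u + 0 - z = z * ((-1) * (1 - u)) by ring, mul_pow (z:ℝ), mul_pow (-1:ℝ)]
  push_cast
  rw [add_zero, sub_zero, mul_pow, ← sub_eq_add_neg]
  ring

/-- one component -/
theorem pade_comp (i j k N d e : ℕ) (hd : i + j + 1 = 2 * N + d) (hk : k + d = N) (w p q : ℤ) (Z : ℝ)
    (hw0 : 0 ≤ w) (hw : w ≤ Z)
    (h : ∀ u : ℝ, 0 ≤ u → u ≤ 1 → |p * u + q| ≤ Z) :
    ∃ P : ℤ, (P : ℝ) * w ^ (2 * N) = padeMult i j k * (w ^ (i + j + 1) * ((-1) ^ e * padeJ i j k p q))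
      ∧ |(P : ℝ)| ≤ 512 ^ N * Z ^ N := by
  obtain ⟨n, hn⟩ := padeJ_int i j k p q
  refine ⟨w ^ d * (-1) ^ e * n, ?_, ?_⟩
  · push_cast
    rw [hn, hd, pow_add]; ring
  · push_cast
    rw [hn, abs_mul, abs_mul, abs_mul, abs_pow, abs_pow, abs_neg, abs_one, one_pow, mul_one]
    have hw0' : (0:ℝ) ≤ w := by exact_mod_cast hw0
    have hm : (padeMult i j k : ℝ) ≤ 512 ^ N := by
      exact_mod_cast padeMult_le i j k N (by omega)
    have hJ := padeJ_bound i j k p q Z h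
    have hZ : 0 ≤ Z := hw0'.trans hw
    rw [abs_of_nonneg hw0', abs_of_nonneg (by positivity : (0:ℝ) ≤ padeMult i j k)]
    calc (w:ℝ) ^ d * (padeMult i j k * |padeJ i j k p q|) ≤ Z ^ d * (512 ^ N * Z ^ k) := by gcongr
      _ = 512 ^ N * Z ^ N := by rw [← hk]; ring

theorem pade_one (i j k N d1 d2 d3 : ℕ) (h1 : i + j + 1 = 2 * N + d1) (h2 : j + k + 1 = 2 * N + d2)
    (h3 : i + k + 1 = 2 * N + d3) (h : i + j + k + 1 = 3 * N) (x y z : ℤ) (hx : 0 < x) (hy : 0 < y)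
    (hz : x + y = z) : ∃ P Q R : ℤ,
      (P : ℝ) * x ^ (2 * N) = padeMult i j k * ∫ s in (0:ℝ)..x, padeF i j k x z s ∧
      (Q : ℝ) * y ^ (2 * N) = padeMult i j k * ∫ s in (x:ℝ)..z, padeF i j k x z s ∧
      P * x ^ (2 * N) + Q * y ^ (2 * N) = R * z ^ (2 * N) ∧
      |(P : ℝ)| ≤ 512 ^ N * z ^ N ∧ |(Q : ℝ)| ≤ 512 ^ N * z ^ N ∧ |(R : ℝ)| ≤ 512 ^ N * z ^ N := by
  have hx' : (0:ℝ) < x := by exact_mod_cast hx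
  have hy' : (0:ℝ) < y := by exact_mod_cast hy
  have hz' : (x:ℝ) + y = z := by exact_mod_cast hz
  have hzx : z - x = y := by omega
  have hzx' : (z:ℝ) - x = y := by linarith
  obtain ⟨P, hP, hPb⟩ := pade_comp i j k N d1 j h1 (by omega) x x (-z) z hx.le (by linarith) (by
    intro u h0 h1
    have := mul_le_mul_of_nonneg_left h1 hx'.le
    have := mul_nonneg hx'.le h0
    push_cast
    rw [abs_le]; constructor <;> linarith)
  obtain ⟨Q, hQ, hQb⟩ := pade_comp j k i N d2 k h2 (by omega) y (z - x) x z hy.le (by linarith) (by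
    intro u h0 h1
    rw [hzx]
    have := mul_le_mul_of_nonneg_left h1 hy'.le
    have := mul_nonneg hy'.le h0
    rw [abs_le]; constructor <;> linarith)
  obtain ⟨R, hR, hRb⟩ := pade_comp i k j N d3 k h3 (by omega) z z (-x) z (by omega) le_rfl (by
    intro u h0 h1
    have := mul_le_mul_of_nonneg_left h1 (by linarith : (0:ℝ) ≤ z)
    have := mul_nonneg (by linarith : (0:ℝ) ≤ z) h0
    push_cast
    rw [abs_le]; constructor <;> linarith)
  rw [← padeF_1] at hP
  rw [← hzx', ← padeF_2, hzx', padeMult_perm j k i i j k (by ring) (by ring)] at hQ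
  rw [← padeF_3, padeMult_perm i k j i j k (by ring) (by ring)] at hR
  refine ⟨P, Q, R, hP, hQ, ?_, hPb, hQb, hRb⟩
  have := intervalIntegral.integral_add_adjacent_intervals (padeF_int i j k x z 0 x)
    (padeF_int i j k x z x z)
  have h : (P:ℝ) * x ^ (2 * N) + Q * y ^ (2 * N) = R * z ^ (2 * N) := by
    rw [hP, hQ, hR, ← this]; ring
  exact_mod_cast h

theorem pade_exists (N : ℕ) (hN : 0 < N) (x y z : ℤ) (hx : 0 < x) (hy : 0 < y) (hz : x + y = z) :
    ∃ P Q R P' Q' R' : ℤ,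
      P * x ^ (2 * N) + Q * y ^ (2 * N) = R * z ^ (2 * N) ∧
      |(P : ℝ)| ≤ 512 ^ N * z ^ N ∧ |(Q : ℝ)| ≤ 512 ^ N * z ^ N ∧ |(R : ℝ)| ≤ 512 ^ N * z ^ N ∧
      P' * x ^ (2 * N) + Q' * y ^ (2 * N) = R' * z ^ (2 * N) ∧
      |(P' : ℝ)| ≤ 512 ^ N * z ^ N ∧ |(Q' : ℝ)| ≤ 512 ^ N * z ^ N ∧ |(R' : ℝ)| ≤ 512 ^ N * z ^ N ∧
      P * Q' - P' * Q ≠ 0 := by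
  obtain ⟨n, rfl⟩ : ∃ n, N = n + 1 := ⟨N - 1, by omega⟩
  obtain ⟨P, Q, R, hP, hQ, hR, b1, b2, b3⟩ := pade_one (n+1) (n+1) n (n+1) 1 0 0 (by ring) (by ring)
    (by ring) (by ring) x y z hx hy hz
  obtain ⟨P', Q', R', hP', hQ', hR', b1', b2', b3'⟩ := pade_one (n+1) n (n+1) (n+1) 0 0 1 (by ring) (by ring)
    (by ring) (by ring) x y z hx hy hz
  refine ⟨P, Q, R, P', Q', R', hR, b1, b2, b3, hR', b1', b2', b3', ?_⟩
  have hx' : (0:ℝ) < x := by exact_mod_cast hx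
  have hy' : (0:ℝ) < y := by exact_mod_cast hy
  have hz' : (x:ℝ) + y = z := by exact_mod_cast hz
  have i1 : 0 < ∫ s in (0:ℝ)..x, - padeF (n+1) (n+1) n x z s := by
    apply intervalIntegral.intervalIntegral_pos_of_pos_on ((padeF_int _ _ _ _ _ _ _).neg) _ hx'
    intro s hs
    have e : -padeF (n+1) (n+1) n x z s = s ^ (n+1) * ((x - s) * (z - s)) ^ n * (x - s) := by
      rw [show ((x:ℝ) - s) * (z - s) = (s - x) * (s - z) by ring, mul_pow, padeF]; ring
    rw [Pi.neg_apply, e]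
    have := hs.1
    have : 0 < x - s := by linarith [hs.2]
    have : 0 < z - s := by linarith [hs.2]
    positivity
  have i2 : 0 < ∫ s in (0:ℝ)..x, - padeF (n+1) n (n+1) x z s := by
    apply intervalIntegral.intervalIntegral_pos_of_pos_on ((padeF_int _ _ _ _ _ _ _).neg) _ hx'
    intro s hs
    have e : -padeF (n+1) n (n+1) x z s = s ^ (n+1) * ((x - s) * (z - s)) ^ n * (z - s) := by
      rw [show ((x:ℝ) - s) * (z - s) = (s - x) * (s - z) by ring, mul_pow, padeF]; ring
    rw [Pi.neg_apply, e]
    have := hs.1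
    have : 0 < x - s := by linarith [hs.2]
    have : 0 < z - s := by linarith [hs.2]
    positivity
  have i3 : 0 < ∫ s in (x:ℝ)..z, (-1) ^ n * padeF (n+1) (n+1) n x z s := by
    apply intervalIntegral.intervalIntegral_pos_of_pos_on ((padeF_int _ _ _ _ _ _ _).const_mul _) _ (by linarith)
    intro s hs
    have e : (-1) ^ n * padeF (n+1) (n+1) n x z s = s ^ (n+1) * ((s - x) * (z - s)) ^ n * (s - x) := by
      rw [show ((s:ℝ) - x) * (z - s) = (-1) * ((s - x) * (s - z)) by ring, mul_pow, mul_pow, padeF]; ring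
    rw [e]
    have : 0 < s := by linarith [hs.1]
    have : 0 < s - x := by linarith [hs.1]
    have : 0 < z - s := by linarith [hs.2]
    positivity
  have i4 : 0 < ∫ s in (x:ℝ)..z, (-1) ^ (n+1) * padeF (n+1) n (n+1) x z s := by
    apply intervalIntegral.intervalIntegral_pos_of_pos_on ((padeF_int _ _ _ _ _ _ _).const_mul _) _ (by linarith)
    intro s hs
    have e : (-1) ^ (n+1) * padeF (n+1) n (n+1) x z s = s ^ (n+1) * ((s - x) * (z - s)) ^ n * (z - s) := by
      rw [show ((s:ℝ) - x) * (z - s) = (-1) * ((s - x) * (s - z)) by ring, mul_pow, mul_pow, padeF]; ring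
    rw [e]
    have : 0 < s := by linarith [hs.1]
    have : 0 < s - x := by linarith [hs.1]
    have : 0 < z - s := by linarith [hs.2]
    positivity
  rw [intervalIntegral.integral_neg] at i1 i2
  rw [intervalIntegral.integral_const_mul] at i3 i4
  have m1 : (0:ℝ) < padeMult (n+1) (n+1) n := by exact_mod_cast padeMult_pos _ _ _
  have m2 : (0:ℝ) < padeMult (n+1) n (n+1) := by exact_mod_cast padeMult_pos _ _ _
  have j1 := mul_pos m1 i1
  have j2 := mul_pos m2 i2
  have j3 := mul_pos m1 i3
  have j4 := mul_pos m2 i4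
  rw [mul_neg, ← hP] at j1
  rw [mul_neg, ← hP'] at j2
  rw [mul_left_comm, ← hQ] at j3
  rw [mul_left_comm, ← hQ'] at j4
  intro h0
  have h0' : (P:ℝ) * Q' - P' * Q = 0 := by exact_mod_cast h0
  have k1 := mul_pos j1 j4
  have k2 := mul_pos j2 j3
  have : ((-1:ℝ)^n * x ^ (2 * (n+1)) * y ^ (2 * (n+1))) * ((P:ℝ) * Q' - P' * Q) > 0 := by
    rw [pow_succ (-1:ℝ) n] at k1
    linarith
  rw [h0', mul_zero] at this
  exact lt_irrefl _ this

theorem pade_combine (N : ℕ) (hN : 0 < N) (x y z x2 y2 z2 : ℤ) (hx : 0 < x) (hy : 0 < y)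
    (hz : x + y = z) (hx2 : 0 < x2) (hy2 : 0 < y2) (hz2 : x2 + y2 = z2) (hc : IsCoprime x2 y2)
    (E : ℝ) (hE : 0 ≤ E) (gx gy gz : ℤ)
    (hgx : gx ∣ x ^ (2 * N)) (hgx2 : gx ∣ x2) (hgy : gy ∣ y ^ (2 * N)) (hgy2 : gy ∣ y2)
    (hgz : gz ∣ z ^ (2 * N)) (hgz2 : gz ∣ z2) (hgx0 : 0 < gx) (hgy0 : 0 < gy) (hgz0 : 0 < gz)
    (bx : (x : ℝ) ^ (2 * N) ≤ x2 * E) (hby : (y : ℝ) ^ (2 * N) ≤ y2 * E)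
    (cx : (x2 : ℝ) ≤ gx * E) (cy : (y2 : ℝ) ≤ gy * E) (cz : (z2 : ℝ) ≤ gz * E) :
    (z2 : ℝ) ≤ 2 * (512 ^ N * z ^ N) * E ^ 4 := by
  have main : ∀ P Q R : ℤ, P * x ^ (2 * N) + Q * y ^ (2 * N) = R * z ^ (2 * N) →
      |(P : ℝ)| ≤ 512 ^ N * z ^ N → |(Q : ℝ)| ≤ 512 ^ N * z ^ N →
      P * x ^ (2 * N) * y2 - Q * y ^ (2 * N) * x2 ≠ 0 →
      (z2 : ℝ) ≤ 2 * (512 ^ N * z ^ N) * E ^ 4 := by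
    intro P Q R hR hP hQ hne
    set D := P * x ^ (2 * N) * y2 - Q * y ^ (2 * N) * x2 with hD
    have dx : gx ∣ D := dvd_sub ((hgx.mul_left P).mul_right _) (hgx2.mul_left _)
    have dy : gy ∣ D := dvd_sub (hgy2.mul_left _) ((hgy.mul_left Q).mul_right _)
    have hD' : D = R * z ^ (2 * N) * y2 - Q * y ^ (2 * N) * z2 := by
      rw [hD, ← hR, ← hz2]; ring
    have dz : gz ∣ D := by
      rw [hD']
      exact dvd_sub ((hgz.mul_left R).mul_right _) (hgz2.mul_left _)
    have c1 : IsCoprime gx gy := hc.of_isCoprime_of_dvd_left hgx2 |>.of_isCoprime_of_dvd_right hgy2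
    have cxz : IsCoprime x2 z2 := by
      rw [← hz2]; simpa [add_comm] using hc.add_mul_left_right 1
    have cyz : IsCoprime y2 z2 := by
      rw [← hz2]; simpa [add_comm] using hc.symm.add_mul_left_right 1
    have c2 : IsCoprime gx gz := cxz.of_isCoprime_of_dvd_left hgx2 |>.of_isCoprime_of_dvd_right hgz2
    have c3 : IsCoprime gy gz := cyz.of_isCoprime_of_dvd_left hgy2 |>.of_isCoprime_of_dvd_right hgz2
    have dall : gx * gy * gz ∣ D := (c2.mul_left c3).mul_dvd (c1.mul_dvd dx dy) dz
    have hle : gx * gy * gz ≤ |D| := Int.le_of_dvd (abs_pos.mpr hne) ((dvd_abs _ _).mpr dall)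
    have hle' : (gx : ℝ) * gy * gz ≤ |(D : ℝ)| := by exact_mod_cast hle
    have hx' : (0:ℝ) < x := by exact_mod_cast hx
    have hy' : (0:ℝ) < y := by exact_mod_cast hy
    have hx2' : (0:ℝ) < x2 := by exact_mod_cast hx2
    have hy2' : (0:ℝ) < y2 := by exact_mod_cast hy2
    have hz2' : (x2:ℝ) + y2 = z2 := by exact_mod_cast hz2
    have hgx' : (0:ℝ) < gx := by exact_mod_cast hgx0
    have hgy' : (0:ℝ) < gy := by exact_mod_cast hgy0
    have hgz' : (0:ℝ) < gz := by exact_mod_cast hgz0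
    set K : ℝ := 512 ^ N * z ^ N with hK
    have hK0 : 0 ≤ K := (abs_nonneg _).trans hP
    have up : |(D : ℝ)| ≤ 2 * K * E * (x2 * y2) := by
      have : (D : ℝ) = P * x ^ (2 * N) * y2 - Q * y ^ (2 * N) * x2 := by rw [hD]; push_cast; ring
      rw [this]
      refine (abs_sub _ _).trans ?_
      rw [abs_mul, abs_mul, abs_mul, abs_mul, abs_of_pos hx2', abs_of_pos hy2',
        abs_of_pos (pow_pos hx' _), abs_of_pos (pow_pos hy' _)]
      calc |(P:ℝ)| * x ^ (2 * N) * y2 + |(Q:ℝ)| * y ^ (2 * N) * x2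
          ≤ K * (x2 * E) * y2 + K * (y2 * E) * x2 := by gcongr
        _ = _ := by ring
    have low : (x2 : ℝ) * y2 * z2 ≤ E ^ 3 * (2 * K * E * (x2 * y2)) := by
      calc (x2 : ℝ) * y2 * z2 ≤ (gx * E) * (gy * E) * (gz * E) := by
            have : (0:ℝ) < z2 := by linarith
            gcongr
        _ = E ^ 3 * (gx * gy * gz) := by ring
        _ ≤ _ := mul_le_mul_of_nonneg_left (hle'.trans up) (by positivity)
    have hxy : (0:ℝ) < x2 * y2 := by positivity
    refine le_of_mul_le_mul_left ?_ hxy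
    linarith
  obtain ⟨P, Q, R, P', Q', R', hR, b1, b2, -, hR', b1', b2', -, hne⟩ := pade_exists N hN x y z hx hy hz
  by_cases h : P * x ^ (2 * N) * y2 - Q * y ^ (2 * N) * x2 = 0
  · refine main P' Q' R' hR' b1' b2' fun h' => hne ?_
    have h0 : x ^ (2 * N) * y2 ≠ 0 := by positivity
    refine (mul_eq_zero.mp (?_ : (P * Q' - P' * Q) * (x ^ (2 * N) * y2) = 0)).resolve_right h0
    linear_combination Q' * h - Q * h'
  · exact main P Q R hR b1 b2 h

theorem sunit_dvd (S : Finset ℕ) (hS : ∀ p ∈ S, p.Prime) (m n d : ℕ) (hm : 0 < m) (hn : 0 < n)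
    (hmS : ∀ p : ℕ, p.Prime → p ∣ m → p ∈ S)
    (h : ∀ p ∈ S, m.factorization p ≤ n.factorization p + d) : m ∣ n * (∏ p ∈ S, p) ^ d := by
  have hW : ∏ p ∈ S, p ≠ 0 := Finset.prod_ne_zero_iff.mpr fun p hp => (hS p hp).ne_zero
  rw [← Nat.factorization_prime_le_iff_dvd hm.ne' (by positivity)]
  intro p hp
  by_cases hpm : p ∣ m
  · have hpS := hmS p hp hpm
    rw [Nat.factorization_mul hn.ne' (by positivity), Nat.factorization_pow]
    have h1 : 1 ≤ (∏ p ∈ S, p).factorization p :=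
      (hp.dvd_iff_one_le_factorization hW).mp (Finset.dvd_prod_of_mem _ hpS)
    have := h p hpS
    simp only [Finsupp.coe_add, Finsupp.coe_smul, Pi.add_apply, Pi.smul_apply, smul_eq_mul]
    nlinarith
  · rw [Nat.factorization_eq_zero_of_not_dvd hpm]; exact Nat.zero_le _

theorem sunit_close (S : Finset ℕ) (hS : ∀ p ∈ S, p.Prime) (m n d M : ℕ) (hm : 0 < m) (hn : 0 < n)
    (hmS : ∀ p : ℕ, p.Prime → p ∣ m → p ∈ S) (hnS : ∀ p : ℕ, p.Prime → p ∣ n → p ∈ S)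
    (h1 : ∀ p ∈ S, M * m.factorization p ≤ n.factorization p + d)
    (h2 : ∀ p ∈ S, n.factorization p ≤ M * m.factorization p + d) :
    ∃ g : ℕ, 0 < g ∧ g ∣ m ^ M ∧ g ∣ n ∧ m ^ M ≤ n * (∏ p ∈ S, p) ^ d ∧
      n ≤ g * (∏ p ∈ S, p) ^ d := by
  have hW : 0 < ∏ p ∈ S, p := Finset.prod_pos fun p hp => (hS p hp).pos
  have hf : ∀ p, (m ^ M).factorization p = M * m.factorization p := by
    intro p; rw [Nat.factorization_pow]; rfl
  have d1 : m ^ M ∣ n * (∏ p ∈ S, p) ^ d := by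
    apply sunit_dvd S hS _ _ _ (by positivity) hn
    · intro p hp h; exact hmS p hp (hp.dvd_of_dvd_pow h)
    · intro p hp; rw [hf]; exact h1 p hp
  have d2 : n ∣ m ^ M * (∏ p ∈ S, p) ^ d := by
    apply sunit_dvd S hS _ _ _ hn (by positivity) hnS
    intro p hp; rw [hf]; exact h2 p hp
  refine ⟨Nat.gcd (m ^ M) n, Nat.gcd_pos_of_pos_right _ hn, Nat.gcd_dvd_left _ _,
    Nat.gcd_dvd_right _ _, Nat.le_of_dvd (by positivity) d1, ?_⟩
  have hg := Nat.gcd_pos_of_pos_right (m ^ M) hn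
  refine Nat.le_of_dvd (by positivity) ?_
  rw [← Nat.gcd_mul_right]
  exact Nat.dvd_gcd d2 (Dvd.intro _ rfl)

structure NatSol (S : Finset ℕ) (x y : ℕ) : Prop where
  hx : 0 < x
  hy : 0 < y
  hc : Nat.Coprime x y
  sx : ∀ p : ℕ, p.Prime → p ∣ x → p ∈ S
  sy : ∀ p : ℕ, p.Prime → p ∣ y → p ∈ S
  sz : ∀ p : ℕ, p.Prime → p ∣ x + y → p ∈ S

theorem fact_le_log (p m z : ℕ) (hp : p.Prime) (hm : 0 < m) (hmz : m ≤ z) :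
    (m.factorization p : ℝ) ≤ 2 * Real.log z := by
  have h1 : p ^ m.factorization p ≤ m := Nat.le_of_dvd hm (Nat.ordProj_dvd m p)
  have h2 : 2 ^ m.factorization p ≤ z :=
    (Nat.pow_le_pow_left hp.two_le _).trans (h1.trans hmz)
  have h3 : (2:ℝ) ^ m.factorization p ≤ z := by exact_mod_cast h2
  have h4 := Real.log_le_log (by positivity) h3
  rw [Real.log_pow] at h4
  have : (0.5:ℝ) ≤ Real.log 2 := by linarith [Real.log_two_gt_d9]
  nlinarith [Nat.cast_nonneg (α := ℝ) (m.factorization p)]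

/-- the triple `x, y, x + y` -/
def trip (s : ℕ × ℕ) : Fin 3 → ℕ := ![s.1, s.2, s.1 + s.2]

theorem exists_close (S : Finset ℕ) (hS : ∀ p ∈ S, p.Prime)
    (hinf : ∀ C : ℕ, ∃ x y, NatSol S x y ∧ C < x + y) (ε : ℝ) (hε : 0 < ε) (L : ℝ) :
    ∃ s : ℕ × ℕ, NatSol S s.1 s.2 ∧ L ≤ Real.log (s.1 + s.2 : ℕ) ∧ ∀ B : ℝ, ∃ t : ℕ × ℕ,
      NatSol S t.1 t.2 ∧ B ≤ Real.log (t.1 + t.2 : ℕ) ∧ ∀ p ∈ S, ∀ i : Fin 3,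
      |((trip t i).factorization p : ℝ) / Real.log (t.1 + t.2 : ℕ)
        - (trip s i).factorization p / Real.log (s.1 + s.2 : ℕ)| ≤ ε := by
  choose X Y hsol hlt using hinf
  let f : ℕ → (Fin 3 → S → ℝ) := fun n i p =>
    ((trip (X n, Y n) i).factorization p : ℝ) / Real.log (X n + Y n : ℕ)
  have hlog : ∀ n, 0 < Real.log (X n + Y n : ℕ) := by
    intro n
    apply Real.log_pos
    have := (hsol n).hx
    have := (hsol n).hy
    exact_mod_cast (by omega : 1 < X n + Y n)
  have hf : ∀ n, f n ∈ Set.Icc (0 : Fin 3 → S → ℝ) (fun _ _ => 2) := by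
    intro n
    have hx := (hsol n).hx
    have hy := (hsol n).hy
    refine ⟨fun i p => ?_, fun i p => ?_⟩
    · exact div_nonneg (Nat.cast_nonneg _) (hlog n).le
    · change _ / _ ≤ _
      rw [div_le_iff₀ (hlog n)]
      apply fact_le_log _ _ _ (hS p p.2)
      · fin_cases i <;> simp [trip] <;> omega
      · fin_cases i <;> simp [trip]
  obtain ⟨a, -, φ, hφ, hlim⟩ := tendsto_subseq_of_bounded (Metric.isBounded_Icc _ _) hf
  have hz : Filter.Tendsto (fun n => Real.log (X (φ n) + Y (φ n) : ℕ)) Filter.atTop Filter.atTop := by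
    apply Real.tendsto_log_atTop.comp
    apply tendsto_natCast_atTop_atTop.comp
    exact Filter.tendsto_atTop_mono (fun n => ((hφ.le_apply).trans (hlt (φ n)).le)) Filter.tendsto_id
  have hclose : ∀ᶠ n in Filter.atTop, dist (f (φ n)) a < ε / 2 :=
    hlim (Metric.ball_mem_nhds a (by positivity))
  obtain ⟨n, hn, hnL⟩ := (hclose.and (hz.eventually_ge_atTop L)).exists
  refine ⟨(X (φ n), Y (φ n)), hsol _, hnL, fun B => ?_⟩
  obtain ⟨m, hm, hmB⟩ := (hclose.and (hz.eventually_ge_atTop B)).exists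
  refine ⟨(X (φ m), Y (φ m)), hsol _, hmB, fun p hp i => ?_⟩
  have h1 : dist (f (φ m)) (f (φ n)) ≤ ε := by
    have := dist_triangle_right (f (φ m)) (f (φ n)) a
    linarith
  exact (dist_le_pi_dist (f (φ m) i) (f (φ n) i) ⟨p, hp⟩).trans ((dist_le_pi_dist _ _ i).trans h1)

theorem natSol_bounded (S : Finset ℕ) (hS : ∀ p ∈ S, p.Prime) :
    ∃ C : ℕ, ∀ x y, NatSol S x y → x + y ≤ C := by
  by_contra! hinf
  set W := ∏ p ∈ S, p with hW
  have hW1 : 1 ≤ W := Finset.prod_pos fun p hp => (hS p hp).pos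
  have hlW : 0 ≤ Real.log W := Real.log_nonneg (by exact_mod_cast hW1)
  set ε : ℝ := 1 / (32 * (Real.log W + 1)) with hε
  have hε0 : 0 < ε := by positivity
  have hεW : 2 * ε * Real.log W ≤ 1 / 16 := by
    have : ε * (32 * (Real.log W + 1)) = 1 := by rw [hε]; field_simp
    nlinarith
  have hl512 : 0 < Real.log 512 := Real.log_pos (by norm_num)
  obtain ⟨⟨x, y⟩, hs, hL, hB⟩ := exists_close S hS hinf ε hε0 (4 * Real.log 512)
  set l := Real.log (x + y : ℕ) with hl
  have hl0 : 0 < l := by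
    refine lt_of_lt_of_le ?_ hL; positivity
  obtain ⟨⟨x2, y2⟩, ht, hB2, hcl⟩ := hB (8 + 4 / ε * l + 2 * l)
  set l2 := Real.log (x2 + y2 : ℕ) with hl2
  simp only at hs ht hL hB2 hcl
  have hq : 0 < 4 / ε * l := by positivity
  have hl20 : 0 < l2 := by linarith
  set N := ⌊l2 / (2 * l)⌋₊ with hN
  have hN1 : (N : ℝ) * (2 * l) ≤ l2 := by
    rw [← le_div_iff₀ (by positivity)]; exact Nat.floor_le (by positivity)
  have hN2 : l2 < (N + 1 : ℝ) * (2 * l) := by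
    rw [← div_lt_iff₀ (by positivity)]; exact Nat.lt_floor_add_one _
  have hNpos : 0 < N := by
    rw [hN, Nat.floor_pos, le_div_iff₀ (by positivity)]; linarith
  set d := ⌊2 * ε * l2⌋₊ with hd
  have hdle : (d : ℝ) ≤ 2 * ε * l2 := Nat.floor_le (by positivity)
  have hpos1 : ∀ i, 0 < trip (x, y) i := by
    have := hs.hx; have := hs.hy
    intro i; fin_cases i <;> simp [trip] <;> omega
  have hle1 : ∀ i, trip (x, y) i ≤ x + y := by
    intro i; fin_cases i <;> simp [trip]
  have hdiff : ∀ p ∈ S, ∀ i : Fin 3, |((trip (x2, y2) i).factorization p : ℝ)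
      - (2 * N : ℕ) * (trip (x, y) i).factorization p| ≤ 2 * ε * l2 := by
    intro p hp i
    have h1 := hcl p hp i
    have h2 := fact_le_log p _ _ (hS p hp) (hpos1 i) (hle1 i)
    rw [← hl] at h2
    set v2 : ℝ := ((trip (x2, y2) i).factorization p : ℝ)
    have h3 : (0:ℝ) ≤ (trip (x, y) i).factorization p := Nat.cast_nonneg _
    set v1 : ℝ := ((trip (x, y) i).factorization p : ℝ)
    have e : v2 - (2 * N : ℕ) * v1 = l2 * (v2 / l2 - v1 / l) + (l2 - N * (2 * l)) * (v1 / l) := by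
      push_cast; field_simp; ring
    have h4 : v1 / l ≤ 2 := by rw [div_le_iff₀ hl0]; exact h2
    have h5 : 0 ≤ v1 / l := by positivity
    have h6 : 4 * l ≤ ε * l2 := by
      have : 4 / ε * l ≤ l2 := by linarith
      have := mul_le_mul_of_nonneg_left this hε0.le
      have e2 : ε * (4 / ε * l) = 4 * l := by field_simp
      linarith
    rw [e]
    refine (abs_add_le _ _).trans ?_
    rw [abs_mul, abs_of_pos hl20, abs_of_nonneg (mul_nonneg (by linarith) h5)]
    have h7 : l2 * |v2 / l2 - v1 / l| ≤ l2 * ε := by gcongr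
    have h8 : (l2 - N * (2 * l)) * (v1 / l) ≤ (2 * l) * 2 := by
      apply mul_le_mul _ h4 h5 (by positivity); linarith
    linarith
  have hd1 : ∀ p ∈ S, ∀ i : Fin 3, 2 * N * (trip (x, y) i).factorization p
      ≤ (trip (x2, y2) i).factorization p + d := by
    intro p hp i
    have h := (abs_le.mp (hdiff p hp i)).1
    have h' : ((2 * N * (trip (x, y) i).factorization p - (trip (x2, y2) i).factorization p : ℕ) : ℝ)
        ≤ 2 * ε * l2 := by
      rcases le_total ((trip (x2, y2) i).factorization p) (2 * N * (trip (x, y) i).factorization p) with hh | hh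
      · rw [Nat.cast_sub hh]; push_cast at h ⊢; linarith
      · rw [Nat.sub_eq_zero_of_le hh]; simp; positivity
    have := Nat.le_floor h'
    omega
  have hd2 : ∀ p ∈ S, ∀ i : Fin 3, (trip (x2, y2) i).factorization p
      ≤ 2 * N * (trip (x, y) i).factorization p + d := by
    intro p hp i
    have h := (abs_le.mp (hdiff p hp i)).2
    have h' : (((trip (x2, y2) i).factorization p - 2 * N * (trip (x, y) i).factorization p : ℕ) : ℝ)
        ≤ 2 * ε * l2 := by
      rcases le_total (2 * N * (trip (x, y) i).factorization p) ((trip (x2, y2) i).factorization p) with hh | hh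
      · rw [Nat.cast_sub hh]; push_cast at h ⊢; linarith
      · rw [Nat.sub_eq_zero_of_le hh]; simp; positivity
    have := Nat.le_floor h'
    omega
  have hxp := hs.hx
  have hyp := hs.hy
  have hx2p := ht.hx
  have hy2p := ht.hy
  obtain ⟨gx, gx0, gx1, gx2, gx3, gx4⟩ := sunit_close S hS x x2 d (2 * N) hxp hx2p hs.sx ht.sx
    (fun p hp => hd1 p hp 0) (fun p hp => hd2 p hp 0)
  obtain ⟨gy, gy0, gy1, gy2, gy3, gy4⟩ := sunit_close S hS y y2 d (2 * N) hyp hy2p hs.sy ht.sy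
    (fun p hp => hd1 p hp 1) (fun p hp => hd2 p hp 1)
  obtain ⟨gz, gz0, gz1, gz2, gz3, gz4⟩ := sunit_close S hS (x + y) (x2 + y2) d (2 * N) (by omega)
    (by omega) hs.sz ht.sz (fun p hp => hd1 p hp 2) (fun p hp => hd2 p hp 2)
  rw [← hW] at gx3 gx4 gy3 gy4 gz3 gz4
  have fin := pade_combine N hNpos x y (x + y : ℕ) x2 y2 (x2 + y2 : ℕ) (by exact_mod_cast hxp)
    (by exact_mod_cast hyp) (by push_cast; rfl) (by exact_mod_cast hx2p) (by exact_mod_cast hy2p)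
    (by push_cast; rfl) (Nat.isCoprime_iff_coprime.mpr ht.hc) ((W : ℝ) ^ d) (by positivity) gx gy gz
    (by exact_mod_cast gx1) (by exact_mod_cast gx2) (by exact_mod_cast gy1) (by exact_mod_cast gy2)
    (by exact_mod_cast gz1) (by exact_mod_cast gz2) (by exact_mod_cast gx0) (by exact_mod_cast gy0)
    (by exact_mod_cast gz0) (by exact_mod_cast gx3) (by exact_mod_cast gy3) (by exact_mod_cast gx4)
    (by exact_mod_cast gy4) (by exact_mod_cast gz4)
  simp only [Int.cast_natCast] at fin
  have hW0 : (0:ℝ) < W := by exact_mod_cast hW1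
  have hzr : (0:ℝ) < (x + y : ℕ) := by exact_mod_cast (by omega : 0 < x + y)
  have hz2r : (0:ℝ) < (x2 + y2 : ℕ) := by exact_mod_cast (by omega : 0 < x2 + y2)
  have lg := Real.log_le_log hz2r fin
  rw [Real.log_mul (by positivity) (by positivity), Real.log_mul (by positivity) (by positivity),
    Real.log_mul (by positivity) (by positivity), Real.log_pow, Real.log_pow, Real.log_pow,
    Real.log_pow, ← hl, ← hl2] at lg
  have hdW : (d : ℝ) * Real.log W ≤ l2 / 16 := by
    calc (d : ℝ) * Real.log W ≤ 2 * ε * l2 * Real.log W := by gcongr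
      _ = l2 * (2 * ε * Real.log W) := by ring
      _ ≤ l2 * (1 / 16) := by gcongr
      _ = _ := by ring
  have hlog2 : Real.log 2 < 1 := by linarith [Real.log_two_lt_d9]
  have hN512 : (N : ℝ) * (4 * Real.log 512) ≤ N * l := by gcongr
  push_cast at lg
  linarith

theorem coprime_bounded (S : Finset ℕ) (C : ℕ) (hC : ∀ x y, NatSol S x y → x + y ≤ C) (x y : ℤ)
    (hx : IsSUnit S x) (hy : IsSUnit S y) (hxy : IsSUnit S (x + y)) (hc : IsCoprime x y) :
    |x| ≤ C ∧ |y| ≤ C := by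
  have gen : ∀ u v : ℤ, 0 < u → 0 < v → IsCoprime u v → IsSUnit S u → IsSUnit S v →
      IsSUnit S (u + v) → u + v ≤ C := by
    intro u v hu hv huv su sv suv
    lift u to ℕ using hu.le
    lift v to ℕ using hv.le
    have := hC u v ⟨by exact_mod_cast hu, by exact_mod_cast hv, Nat.isCoprime_iff_coprime.mp huv,
      fun p hp h => su.2 p hp (by exact_mod_cast h), fun p hp h => sv.2 p hp (by exact_mod_cast h),
      fun p hp h => suv.2 p hp (by exact_mod_cast h)⟩
    exact_mod_cast this
  have neg : ∀ u : ℤ, IsSUnit S u → IsSUnit S (-u) := fun u hu =>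
    ⟨neg_ne_zero.mpr hu.1, fun p hp h => hu.2 p hp ((dvd_neg).mp h)⟩
  have c1 : IsCoprime (x + y) y := by simpa using hc.add_mul_left_left 1
  have c2 : IsCoprime (x + y) x := by
    have := hc.symm.add_mul_left_left 1
    simpa [add_comm] using this
  have nx := neg x hx
  have ny := neg y hy
  have nxy := neg _ hxy
  rcases lt_or_gt_of_ne hx.1 with h1 | h1 <;> rcases lt_or_gt_of_ne hy.1 with h2 | h2
  · have := gen (-x) (-y) (by omega) (by omega) hc.neg_neg nx ny
      (by rw [← neg_add]; exact nxy)
    rw [abs_of_neg h1, abs_of_neg h2]; omega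
  · rw [abs_of_neg h1, abs_of_pos h2]
    rcases lt_or_gt_of_ne hxy.1 with h3 | h3
    · have := gen (-(x + y)) y (by omega) h2 c1.neg_left nxy hy (by convert nx using 1; ring)
      omega
    · have := gen (x + y) (-x) (by omega) (by omega) c2.neg_right hxy nx (by convert hy using 1; ring)
      omega
  · rw [abs_of_pos h1, abs_of_neg h2]
    rcases lt_or_gt_of_ne hxy.1 with h3 | h3
    · have := gen (-(x + y)) x (by omega) h1 c2.neg_left nxy hx (by convert ny using 1; ring)
      omega
    · have := gen (x + y) (-y) (by omega) (by omega) c1.neg_right hxy ny (by convert hx using 1; ring)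
      omega
  · have := gen x y h1 h2 hc hx hy hxy
    rw [abs_of_pos h1, abs_of_pos h2]; omega

theorem bounded_sums_of_two_S_units
    (S : Finset ℕ) (hS : ∀ p ∈ S, p.Prime) (a : ℕ) (ha : 0 < a) :
    ∃ C : ℤ, ∀ x y : ℤ, IsSUnit S x → IsSUnit S y → Int.gcd x y ≤ a →
      IsSUnit S (x + y) → max |x| |y| ≤ C := by
  obtain ⟨C, hC⟩ := natSol_bounded S hS
  refine ⟨a * C, fun x y hx hy hg hxy => ?_⟩
  have hg0 : 0 < Int.gcd x y := Int.gcd_pos_of_ne_zero_left _ hx.1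
  obtain ⟨x', hx'⟩ := Int.gcd_dvd_left x y
  obtain ⟨y', hy'⟩ := Int.gcd_dvd_right x y
  have hcop : IsCoprime x' y' := by
    have := Int.gcd_ediv_gcd_ediv_gcd hg0
    rw [Int.isCoprime_iff_gcd_eq_one]
    have hgz : (Int.gcd x y : ℤ) ≠ 0 := by exact_mod_cast hg0.ne'
    rwa [Int.ediv_eq_of_eq_mul_right hgz hx', Int.ediv_eq_of_eq_mul_right hgz hy'] at this
  generalize Int.gcd x y = g at *
  have down : ∀ u : ℤ, IsSUnit S (g * u) → IsSUnit S u := fun u hu =>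
    ⟨right_ne_zero_of_mul hu.1, fun p hp h => hu.2 p hp (h.mul_left _)⟩
  subst hx' hy'
  rw [← mul_add] at hxy
  obtain ⟨h1, h2⟩ := coprime_bounded S C hC x' y' (down _ hx) (down _ hy) (down _ hxy) hcop
  have hga : (g : ℤ) ≤ a := by exact_mod_cast hg
  rw [abs_mul, abs_mul, Nat.abs_cast]
  apply max_le <;> gcongr
end
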